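/- Let θ ∈ (0, 1/2] be such that θ⁻¹ ≥ 2 is an integer, let n ≥ 2 be an integer, and let U : S_{T[θ,S_n]} → S_{T[θ,S_n]} be a surjective isometry of the unit sphere of T[θ, S_n]. Then there exists a sequence (ε_i)_{i=1}^∞ with values in {−1, 1} such that U(e_i) = ε_i e_i for every positive integer i. -/

import Mathlib

open scoped BigOperators

noncomputable section

/-- Projection of a finitely supported vector onto the coordinates in `E`. -/
def tsProj (E : Finset ℕ+) (x : ℕ+ →₀ ℝ) : ℕ+ →₀ ℝ :=
  x.filter fun i => i ∈ E

/-- The Schreier families `S_n` on the positive integers: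
`S₁` consists of the sets `F` with `|F| ≤ min F` (together with `∅`), and `S_{n+1}`
consists of unions `F₁ ∪ ⋯ ∪ F_d` of nonempty members `F₁ < ⋯ < F_d` of `S_n`
with `d ≤ min F₁` (together with `∅`). -/
def Schreier : ℕ → Set (Finset ℕ+)
  | 0 => {F | F.card ≤ 1}
  | 1 => {F | ∀ a ∈ F, F.card ≤ (a : ℕ)}
  | n + 2 =>
      {F | F = ∅ ∨
        ∃ (d : ℕ) (G : Fin d → Finset ℕ+),
          0 < d ∧ (∀ i, G i ∈ Schreier (n + 1)) ∧ (∀ i, (G i).Nonempty) ∧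
          (∀ i j : Fin d, i < j → ∀ a ∈ G i, ∀ b ∈ G j, a < b) ∧
          (∀ i, ∀ a ∈ G i, d ≤ (a : ℕ)) ∧ F = Finset.univ.biUnion G}

/-- A tuple of nonempty finite sets `E 0 < E 1 < ⋯` whose set of minima belongs to `S`. -/
def TsAdmissible (S : Set (Finset ℕ+)) {d : ℕ} (E : Fin d → Finset ℕ+) : Prop :=
  (∀ i, (E i).Nonempty) ∧
  (∀ i j : Fin d, i < j → ∀ a ∈ E i, ∀ b ∈ E j, a < b) ∧
  ∃ μ : Fin d → ℕ+, (∀ i, IsLeast (↑(E i) : Set ℕ+) (μ i)) ∧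
    Finset.univ.image μ ∈ S

/-- The iterated norms `‖·‖_m` in the construction of the Tsirelson norm:
`‖x‖₀` is the supremum norm and
`‖x‖_{m+1} = max(‖x‖_m, sup{θ ∑ᵢ ‖Eᵢ x‖_m : E₁ < ⋯ < E_d, {min Eᵢ} ∈ S})`. -/
def tnormAux (θ : ℝ) (S : Set (Finset ℕ+)) : ℕ → (ℕ+ →₀ ℝ) → ℝ
  | 0, x => ⨆ i, |x i|
  | m + 1, x =>
      max (tnormAux θ S m x)
        (sSup {r : ℝ | ∃ (d : ℕ) (E : Fin d → Finset ℕ+), TsAdmissible S E ∧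
          r = θ * ∑ i, tnormAux θ S m (tsProj (E i) x)})

/-- The Tsirelson norm `‖x‖_{θ,S} = sup_m ‖x‖_m` on `c₀₀`. -/
def tnorm (θ : ℝ) (S : Set (Finset ℕ+)) (x : ℕ+ →₀ ℝ) : ℝ :=
  ⨆ m : ℕ, tnormAux θ S m x

/-- `X`, together with the sequence `e` of unit vectors, is (a realization of) the
Tsirelson space `T[θ, S_n]`: a Banach space containing `c₀₀` isometrically
(w.r.t. the Tsirelson norm) as a dense subspace, in which `(e i)` is a
(1-unconditional) basis, i.e. every `x` has a unique expansion `x = ∑ᵢ aᵢ eᵢ`. -/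
structure IsTsirelsonSpace (θ : ℝ) (n : ℕ) (X : Type*) [NormedAddCommGroup X]
    [NormedSpace ℝ X] (e : ℕ+ → X) : Prop where
  complete : CompleteSpace X
  norm_embed : ∀ a : ℕ+ →₀ ℝ, ‖a.sum fun i c => c • e i‖ = tnorm θ (Schreier n) a
  dense_embed : DenseRange fun a : ℕ+ →₀ ℝ => a.sum fun i c => c • e i
  expansion : ∀ x : X, ∃! a : ℕ+ → ℝ, HasSum (fun i => a i • e i) x

/-! ### Schreier combinatorics -/

lemma sch_one_iff (F : Finset ℕ+) : F ∈ Schreier 1 ↔ ∀ a ∈ F, F.card ≤ (a : ℕ) := by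
  simp [Schreier]

lemma sch_empty : ∀ n, (∅ : Finset ℕ+) ∈ Schreier n
  | 0 => by simp [Schreier]
  | 1 => by simp [Schreier]
  | n + 2 => by simp [Schreier]

lemma sch_iff (n : ℕ) (F : Finset ℕ+) : F ∈ Schreier (n + 2) ↔
    ∃ (d : ℕ) (c : ℕ+ → ℕ), (∀ a ∈ F, c a < d) ∧ (∀ a ∈ F, ∀ b ∈ F, a ≤ b → c a ≤ c b) ∧
      (∀ i, F.filter (fun a => c a = i) ∈ Schreier (n + 1)) ∧ (∀ a ∈ F, d ≤ (a : ℕ)) := by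
  classical
  constructor
  · intro h
    rw [Schreier] at h
    rcases h with rfl | ⟨d, G, hd, hG, hne, hlt, hmin, rfl⟩
    · exact ⟨0, fun _ => 0, by simp, by simp, by simp [sch_empty], by simp⟩
    · have key : ∀ a ∈ Finset.univ.biUnion G, ∃ i : Fin d, a ∈ G i := by
        intro a ha; simpa using ha
      have uniq : ∀ a (i j : Fin d), a ∈ G i → a ∈ G j → i = j := by
        intro a i j hi hj
        rcases lt_trichotomy i j with h | h | h
        · exact absurd (hlt i j h a hi a hj) (lt_irrefl _)
        · exact h
        · exact absurd (hlt j i h a hj a hi) (lt_irrefl _)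
      let c : ℕ+ → ℕ := fun a => if h : ∃ i : Fin d, a ∈ G i then (h.choose : ℕ) else d
      have hc : ∀ a (i : Fin d), a ∈ G i → c a = i := by
        intro a i hi
        have h : ∃ i : Fin d, a ∈ G i := ⟨i, hi⟩
        simp only [c, dif_pos h]
        rw [uniq a _ _ h.choose_spec hi]
      refine ⟨d, c, ?_, ?_, ?_, ?_⟩
      · intro a ha
        obtain ⟨i, hi⟩ := key a ha
        rw [hc a i hi]; exact i.2
      · intro a ha b hb hab
        obtain ⟨i, hi⟩ := key a ha
        obtain ⟨j, hj⟩ := key b hb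
        rw [hc a i hi, hc b j hj]
        by_contra hcon
        have : j < i := by simpa using hcon
        exact absurd (hlt j i this b hj a hi) (not_lt.2 hab)
      · intro i
        by_cases hi : i < d
        · convert hG ⟨i, hi⟩ using 1
          ext a
          simp only [Finset.mem_filter, Finset.mem_biUnion, Finset.mem_univ, true_and]
          constructor
          · rintro ⟨⟨j, hj⟩, h⟩
            rw [hc a j hj] at h
            have : j = ⟨i, hi⟩ := Fin.ext h
            rwa [this] at hj
          · intro h
            exact ⟨⟨_, h⟩, hc a _ h⟩
        · convert sch_empty (n + 1) using 1
          apply Finset.filter_eq_empty_iff.2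
          intro a ha h
          obtain ⟨j, hj⟩ := key a ha
          rw [hc a j hj] at h
          have := j.2
          omega
      · intro a ha
        obtain ⟨j, hj⟩ := key a ha
        exact hmin j a hj
  · rintro ⟨d, c, hcd, hmono, hfib, hmin⟩
    rw [Schreier]
    by_cases hF : F = ∅
    · exact Or.inl hF
    right
    have hFne : F.Nonempty := Finset.nonempty_iff_ne_empty.2 hF
    let I := F.image c
    have hI : I.card ≤ d := by
      have : I ⊆ Finset.range d := by
        intro i hi
        obtain ⟨a, ha, rfl⟩ := Finset.mem_image.1 hi
        exact Finset.mem_range.2 (hcd a ha)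
      simpa using Finset.card_le_card this
    let o := I.orderEmbOfFin rfl
    refine ⟨I.card, fun j => F.filter (fun a => c a = o j), ?_, ?_, ?_, ?_, ?_, ?_⟩
    · exact Finset.card_pos.2 (hFne.image c)
    · intro j; exact hfib _
    · intro j
      have := I.orderEmbOfFin_mem rfl j
      obtain ⟨a, ha, h⟩ := Finset.mem_image.1 this
      exact ⟨a, Finset.mem_filter.2 ⟨ha, h⟩⟩
    · intro i j hij a ha b hb
      rw [Finset.mem_filter] at ha hb
      by_contra hcon
      have h1 := hmono b hb.1 a ha.1 (not_lt.1 hcon)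
      have h2 : o i < o j := o.strictMono hij
      omega
    · intro i a ha
      rw [Finset.mem_filter] at ha
      exact hI.trans (hmin a ha.1)
    · ext a
      simp only [Finset.mem_biUnion, Finset.mem_filter, Finset.mem_univ, true_and]
      constructor
      · intro ha
        have : c a ∈ Set.range o := by
          rw [Finset.range_orderEmbOfFin]
          exact Finset.mem_coe.2 (Finset.mem_image_of_mem c ha)
        obtain ⟨j, hj⟩ := this
        exact ⟨j, ha, hj.symm⟩
      · rintro ⟨_, h, _⟩; exact h

/-- hereditary + spreading -/
lemma sch_dom (n : ℕ) : ∀ (F G : Finset ℕ+) (σ : ℕ+ → ℕ+), F ∈ Schreier (n + 1) →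
    (∀ a ∈ G, σ a ∈ F) → (∀ a ∈ G, σ a ≤ a) → (∀ a ∈ G, ∀ b ∈ G, a < b → σ a < σ b) →
    G ∈ Schreier (n + 1) := by
  classical
  induction n with
  | zero =>
    intro F G σ hF hm hle hlt
    rw [zero_add, sch_one_iff] at *
    intro a ha
    have h1 : G.card ≤ F.card := by
      apply Finset.card_le_card_of_injOn σ hm
      intro x hx y hy hxy
      rcases lt_trichotomy x y with h | h | h
      · exact absurd hxy (hlt x hx y hy h).ne
      · exact h
      · exact absurd hxy (hlt y hy x hx h).ne'
    have h2 := hF _ (hm a ha)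
    have h3 : (σ a : ℕ) ≤ a := hle a ha
    omega
  | succ n ih =>
    intro F G σ hF hm hle hlt
    obtain ⟨d, c, hcd, hmono, hfib, hmin⟩ := (sch_iff n F).1 hF
    refine (sch_iff n G).2 ⟨d, fun a => c (σ a), ?_, ?_, ?_, ?_⟩
    · intro a ha; exact hcd _ (hm a ha)
    · intro a ha b hb hab
      apply hmono _ (hm a ha) _ (hm b hb)
      rcases hab.lt_or_eq with h | h
      · exact (hlt a ha b hb h).le
      · rw [h]
    · intro i
      refine ih _ _ σ (hfib i) ?_ ?_ ?_
      · intro a ha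
        rw [Finset.mem_filter] at ha ⊢
        exact ⟨hm a ha.1, ha.2⟩
      · intro a ha
        exact hle a (Finset.mem_filter.1 ha).1
      · intro a ha b hb
        exact hlt a (Finset.mem_filter.1 ha).1 b (Finset.mem_filter.1 hb).1
    · intro a ha
      have h3 : (σ a : ℕ) ≤ a := hle a ha
      exact (hmin _ (hm a ha)).trans h3

lemma sch_sub (n : ℕ) {F G : Finset ℕ+} (hF : F ∈ Schreier (n + 1)) (h : G ⊆ F) :
    G ∈ Schreier (n + 1) :=
  sch_dom n F G id hF (fun a ha => h ha) (fun _ _ => le_rfl) (fun _ _ _ _ h => h)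

lemma sch_succ (n : ℕ) {F : Finset ℕ+} (hF : F ∈ Schreier (n + 1)) : F ∈ Schreier (n + 2) := by
  refine (sch_iff n F).2 ⟨1, fun _ => 0, by simp, by simp, ?_, ?_⟩
  · intro i
    exact sch_sub n hF (Finset.filter_subset _ _)
  · intro a _; exact a.2

lemma sch_of_one (n : ℕ) {F : Finset ℕ+} (hF : F ∈ Schreier 1) : F ∈ Schreier (n + 1) := by
  induction n with
  | zero => exact hF
  | succ n ih => exact sch_succ n ih

lemma sch_one_mem (n : ℕ) : ∀ F : Finset ℕ+, F ∈ Schreier (n + 1) → 1 ∈ F → F.card ≤ 1 := by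
  induction n with
  | zero =>
    intro F hF h1
    simpa using (sch_one_iff F).1 hF 1 h1
  | succ n ih =>
    intro F hF h1
    obtain ⟨d, c, hcd, hmono, hfib, hmin⟩ := (sch_iff n F).1 hF
    have hd : d ≤ 1 := by simpa using hmin 1 h1
    have : F.filter (fun a => c a = 0) = F := by
      apply Finset.filter_true_of_mem
      intro a ha
      have := hcd a ha
      omega
    have h := hfib 0
    rw [this] at h
    exact ih F h h1

lemma sch_two (n : ℕ) (B A : Finset ℕ+) (hB : B.card ≤ 2) (hB2 : ∀ a ∈ B, 2 ≤ (a : ℕ))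
    (hA2 : ∀ a ∈ A, 2 ≤ (a : ℕ)) (hBA : ∀ b ∈ B, ∀ a ∈ A, b < a) (hA : A ∈ Schreier 1) :
    B ∪ A ∈ Schreier (n + 2) := by
  classical
  refine (sch_iff n _).2 ⟨2, fun a => if a ∈ B then 0 else 1, ?_, ?_, ?_, ?_⟩
  · intro a _; dsimp only; split_ifs <;> norm_num
  · intro a ha b hb hab
    dsimp only
    split_ifs with h1 h2 h2
    · exact le_rfl
    · exact Nat.zero_le _
    · have ha' : a ∈ A := by
        rcases Finset.mem_union.1 ha with h | h
        · exact absurd h h1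
        · exact h
      exact absurd (hBA b h2 a ha') (not_lt.2 hab)
    · exact le_rfl
  · intro i
    have hB' : B ∈ Schreier (n + 1) := by
      apply sch_of_one
      rw [sch_one_iff]
      intro a ha
      exact hB.trans (hB2 a ha)
    by_cases hi : i = 0
    · apply sch_sub n hB'
      intro a ha
      rw [Finset.mem_filter] at ha
      by_contra hcon
      have := ha.2
      simp only [if_neg hcon] at this
      omega
    · apply sch_sub n (sch_of_one n hA)
      intro a ha
      rw [Finset.mem_filter] at ha
      rcases Finset.mem_union.1 ha.1 with h | h
      · have := ha.2
        simp only [if_pos h] at this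
        omega
      · exact h
  · intro a ha
    rcases Finset.mem_union.1 ha with h | h
    · exact hB2 a h
    · exact hA2 a h

lemma sch_noinf (n : ℕ) : ∀ f : ℕ → ℕ+, StrictMono f →
    ∃ r, (Finset.range r).image f ∉ Schreier (n + 1) := by
  classical
  induction n with
  | zero =>
    intro f hf
    refine ⟨(f 0 : ℕ) + 1, ?_⟩
    rw [zero_add, sch_one_iff]
    intro h
    have := h (f 0) (Finset.mem_image_of_mem f (by simp))
    rw [Finset.card_image_of_injective _ hf.injective, Finset.card_range] at this
    omega
  | succ n ih =>
    intro f hf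
    have key : ∀ d : ℕ, ∃ r, ∀ R, r ≤ R → ∀ c : ℕ+ → ℕ,
        (∀ a ∈ (Finset.range (R + 1)).image f, ∀ b ∈ (Finset.range (R + 1)).image f,
          a ≤ b → c a ≤ c b) →
        (∀ i, ((Finset.range (R + 1)).image f).filter (fun a => c a = i) ∈ Schreier (n + 1)) →
        d ≤ c (f r) := by
      intro d
      induction d with
      | zero => exact ⟨0, fun _ _ _ _ _ => Nat.zero_le _⟩
      | succ d ihd =>
        obtain ⟨r, hr⟩ := ihd
        obtain ⟨s, hs⟩ := ih (fun i => f (r + i)) (fun i j hij => hf (by omega))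
        refine ⟨r + s, fun R hR c hmono hfib => ?_⟩
        have h1 := hr R (by omega) c hmono hfib
        by_contra hcon
        apply hs
        apply sch_sub n (hfib d)
        intro a ha
        obtain ⟨i, hi, rfl⟩ := Finset.mem_image.1 ha
        rw [Finset.mem_range] at hi
        have mem : ∀ j, j ≤ R → f j ∈ (Finset.range (R + 1)).image f := by
          intro j hj
          exact Finset.mem_image_of_mem f (Finset.mem_range.2 (by omega))
        rw [Finset.mem_filter]
        refine ⟨mem _ (by omega), ?_⟩
        have h2 := hmono (f r) (mem _ (by omega)) (f (r + i)) (mem _ (by omega))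
          (hf.monotone (by omega))
        have h3 := hmono (f (r + i)) (mem _ (by omega)) (f (r + s)) (mem _ (by omega))
          (hf.monotone (by omega))
        omega
    obtain ⟨r, hr⟩ := key (f 0)
    refine ⟨r + 1, fun h => ?_⟩
    obtain ⟨d, c, hcd, hmono, hfib, hmin⟩ := (sch_iff n _).1 h
    have h1 := hr r le_rfl c hmono hfib
    have h2 := hcd (f r) (Finset.mem_image_of_mem f (by simp))
    have h3 := hmin (f 0) (Finset.mem_image_of_mem f (by simp))
    omega

lemma sch_push (n : ℕ) (f f' : ℕ → ℕ+) (hf : StrictMono f) (hf' : StrictMono f')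
    (hle : ∀ i, f i ≤ f' i) (h0 : f 0 < f' 0) (r : ℕ) (hr : 0 < r)
    (h : (Finset.range r).image f ∈ Schreier (n + 2)) :
    (Finset.range (r + 1)).image f' ∈ Schreier (n + 2) := by
  classical
  obtain ⟨d, c, hcd, hmono, hfib, hmin⟩ := (sch_iff n _).1 h
  let g : ℕ+ → ℕ := Function.invFun f'
  have hg : ∀ i, g (f' i) = i := Function.leftInverse_invFun hf'.injective
  have mem : ∀ j, j < r → f j ∈ (Finset.range r).image f := fun j hj =>
    Finset.mem_image_of_mem f (Finset.mem_range.2 hj)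
  refine (sch_iff n _).2 ⟨d + 1, fun x => if g x < r then c (f (g x)) else d, ?_, ?_, ?_, ?_⟩
  · intro a ha
    obtain ⟨i, hi, rfl⟩ := Finset.mem_image.1 ha
    dsimp only
    rw [hg]
    split_ifs with h1
    · have := hcd _ (mem i h1); omega
    · omega
  · intro a ha b hb hab
    obtain ⟨i, hi, rfl⟩ := Finset.mem_image.1 ha
    obtain ⟨j, hj, rfl⟩ := Finset.mem_image.1 hb
    have hij := hf'.le_iff_le.1 hab
    dsimp only
    rw [hg, hg]
    split_ifs with h1 h2 h2
    · exact hmono _ (mem i h1) _ (mem j h2) (hf.monotone hij)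
    · exact (hcd _ (mem i h1)).le
    · omega
    · exact le_rfl
  · intro i
    by_cases hi : i = d
    · have h1 : ({f' r} : Finset ℕ+) ∈ Schreier (n + 1) := by
        apply sch_of_one
        rw [sch_one_iff]
        intro a _
        rw [Finset.card_singleton]; exact a.2
      apply sch_sub n h1
      intro a ha
      rw [Finset.mem_filter] at ha
      obtain ⟨ha, h2⟩ := ha
      obtain ⟨j, hj, rfl⟩ := Finset.mem_image.1 ha
      simp only [hg] at h2
      rw [Finset.mem_range] at hj
      split_ifs at h2 with h3
      · have := hcd _ (mem j h3); omega
      · have : j = r := by omega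
        simp [this]
    · apply sch_dom n _ _ (fun x => f (g x)) (hfib i)
      · intro a ha
        rw [Finset.mem_filter] at ha
        obtain ⟨ha, h2⟩ := ha
        obtain ⟨j, hj, rfl⟩ := Finset.mem_image.1 ha
        simp only [hg] at h2 ⊢
        split_ifs at h2 with h3
        · exact Finset.mem_filter.2 ⟨mem j h3, h2⟩
        · omega
      · intro a ha
        obtain ⟨j, hj, rfl⟩ := Finset.mem_image.1 (Finset.mem_filter.1 ha).1
        rw [hg]; exact hle j
      · intro a ha b hb hab
        obtain ⟨j, hj, rfl⟩ := Finset.mem_image.1 (Finset.mem_filter.1 ha).1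
        obtain ⟨l, hl, rfl⟩ := Finset.mem_image.1 (Finset.mem_filter.1 hb).1
        rw [hg, hg]
        exact hf (hf'.lt_iff_lt.1 hab)
  · intro a ha
    obtain ⟨j, hj, rfl⟩ := Finset.mem_image.1 ha
    have h1 := hmin _ (mem 0 hr)
    have h2 : (f 0 : ℕ) < f' 0 := h0
    have h3 : (f' 0 : ℕ) ≤ f' j := hf'.monotone (Nat.zero_le j)
    omega

/-! ### The norm on finitely supported vectors -/

def tsL1 (x : ℕ+ →₀ ℝ) : ℝ := ∑ i ∈ x.support, |x i|

lemma tsProj_apply (E : Finset ℕ+) (x : ℕ+ →₀ ℝ) (i : ℕ+) :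
    tsProj E x i = if i ∈ E then x i else 0 := by
  simp [tsProj, Finsupp.filter_apply]

lemma tsL1_eq (x : ℕ+ →₀ ℝ) (A : Finset ℕ+) (h : x.support ⊆ A) : tsL1 x = ∑ i ∈ A, |x i| := by
  unfold tsL1
  apply Finset.sum_subset h
  intro i _ hi
  simp [Finsupp.notMem_support_iff.1 hi]

lemma tsL1_proj (E : Finset ℕ+) (x : ℕ+ →₀ ℝ) :
    tsL1 (tsProj E x) = ∑ i ∈ x.support, if i ∈ E then |x i| else 0 := by
  rw [tsL1_eq (tsProj E x) x.support (by
    intro i hi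
    rw [Finsupp.mem_support_iff, tsProj_apply] at hi
    rw [Finsupp.mem_support_iff]
    intro h
    simp [h] at hi)]
  apply Finset.sum_congr rfl
  intro i _
  rw [tsProj_apply]
  split_ifs <;> simp

lemma tsL1_nonneg (x : ℕ+ →₀ ℝ) : 0 ≤ tsL1 x := Finset.sum_nonneg fun _ _ => abs_nonneg _

lemma coord_le_tsL1 (x : ℕ+ →₀ ℝ) (i : ℕ+) : |x i| ≤ tsL1 x := by
  by_cases h : i ∈ x.support
  · exact Finset.single_le_sum (f := fun i => |x i|) (fun _ _ => abs_nonneg _) h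
  · rw [Finsupp.notMem_support_iff.1 h]
    simpa using tsL1_nonneg x

lemma adm_uniq {S : Set (Finset ℕ+)} {d : ℕ} {E : Fin d → Finset ℕ+} (hE : TsAdmissible S E)
    {a : ℕ+} {i j : Fin d} (hi : a ∈ E i) (hj : a ∈ E j) : i = j := by
  rcases lt_trichotomy i j with h | h | h
  · exact absurd (hE.2.1 i j h a hi a hj) (lt_irrefl _)
  · exact h
  · exact absurd (hE.2.1 j i h a hj a hi) (lt_irrefl _)

lemma adm_sum_L1 {S : Set (Finset ℕ+)} {d : ℕ} {E : Fin d → Finset ℕ+} (hE : TsAdmissible S E)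
    (x : ℕ+ →₀ ℝ) : ∑ j, tsL1 (tsProj (E j) x) ≤ tsL1 x := by
  classical
  simp only [tsL1_proj]
  rw [Finset.sum_comm]
  unfold tsL1
  apply Finset.sum_le_sum
  intro i _
  rw [← Finset.sum_filter, Finset.sum_const]
  have : (Finset.univ.filter (fun j => i ∈ E j)).card ≤ 1 := by
    rw [Finset.card_le_one]
    intro a ha b hb
    exact adm_uniq hE (Finset.mem_filter.1 ha).2 (Finset.mem_filter.1 hb).2
  rw [nsmul_eq_mul]
  have h2 : ((Finset.univ.filter (fun j => i ∈ E j)).card : ℝ) ≤ 1 := by exact_mod_cast this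
  nlinarith [abs_nonneg (x i)]

section
variable {θ : ℝ} {S : Set (Finset ℕ+)}

lemma aux_nonneg (m : ℕ) (x : ℕ+ →₀ ℝ) : 0 ≤ tnormAux θ S m x := by
  induction m with
  | zero => exact Real.iSup_nonneg fun _ => abs_nonneg _
  | succ m ih => exact le_max_of_le_left ih

lemma aux_le_L1 (h0 : 0 ≤ θ) (h1 : θ ≤ 1) (m : ℕ) :
    ∀ x : ℕ+ →₀ ℝ, tnormAux θ S m x ≤ tsL1 x := by
  induction m with
  | zero => intro x; exact ciSup_le (coord_le_tsL1 x)
  | succ m ih =>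
    intro x
    refine max_le (ih x) (Real.sSup_le ?_ (tsL1_nonneg x))
    rintro r ⟨d, E, hE, rfl⟩
    have h2 : ∑ i, tnormAux θ S m (tsProj (E i) x) ≤ tsL1 x :=
      (Finset.sum_le_sum fun i _ => ih _).trans (adm_sum_L1 hE x)
    have h3 : 0 ≤ ∑ i, tnormAux θ S m (tsProj (E i) x) :=
      Finset.sum_nonneg fun i _ => aux_nonneg _ _
    nlinarith

lemma aux_adm (h0 : 0 ≤ θ) (h1 : θ ≤ 1) (m : ℕ) (x : ℕ+ →₀ ℝ) {d : ℕ}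
    {E : Fin d → Finset ℕ+} (hE : TsAdmissible S E) :
    θ * ∑ i, tnormAux θ S m (tsProj (E i) x) ≤ tnormAux θ S (m + 1) x := by
  refine le_max_of_le_right (le_csSup ⟨tsL1 x, ?_⟩ ⟨d, E, hE, rfl⟩)
  rintro r ⟨d, E, hE, rfl⟩
  have h2 : ∑ i, tnormAux θ S m (tsProj (E i) x) ≤ tsL1 x :=
    (Finset.sum_le_sum fun i _ => aux_le_L1 h0 h1 m _).trans (adm_sum_L1 hE x)
  have h3 : 0 ≤ ∑ i, tnormAux θ S m (tsProj (E i) x) :=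
    Finset.sum_nonneg fun i _ => aux_nonneg _ _
  nlinarith

lemma aux_bdd (h0 : 0 ≤ θ) (h1 : θ ≤ 1) (x : ℕ+ →₀ ℝ) :
    BddAbove (Set.range fun m => tnormAux θ S m x) := by
  refine ⟨tsL1 x, ?_⟩
  rintro _ ⟨m, rfl⟩
  exact aux_le_L1 h0 h1 m x

lemma aux_le_tnorm (h0 : 0 ≤ θ) (h1 : θ ≤ 1) (m : ℕ) (x : ℕ+ →₀ ℝ) :
    tnormAux θ S m x ≤ tnorm θ S x := le_ciSup (aux_bdd h0 h1 x) m

lemma tnorm_le_L1 (h0 : 0 ≤ θ) (h1 : θ ≤ 1) (x : ℕ+ →₀ ℝ) : tnorm θ S x ≤ tsL1 x :=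
  ciSup_le fun m => aux_le_L1 h0 h1 m x

lemma coord_le_tnorm (h0 : 0 ≤ θ) (h1 : θ ≤ 1) (x : ℕ+ →₀ ℝ) (i : ℕ+) :
    |x i| ≤ tnorm θ S x := by
  refine le_trans ?_ (aux_le_tnorm h0 h1 0 x)
  refine le_ciSup (f := fun i => |x i|) ⟨tsL1 x, ?_⟩ i
  rintro _ ⟨m, rfl⟩
  exact coord_le_tsL1 x m

lemma tnorm_adm (h0 : 0 ≤ θ) (h1 : θ ≤ 1) (x : ℕ+ →₀ ℝ) {d : ℕ}
    {E : Fin d → Finset ℕ+} (hE : TsAdmissible S E) :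
    θ * ∑ i, tnorm θ S (tsProj (E i) x) ≤ tnorm θ S x := by
  have ht : ∀ y : ℕ+ →₀ ℝ, Filter.Tendsto (fun m => tnormAux θ S m y) Filter.atTop
      (nhds (tnorm θ S y)) := by
    intro y
    apply tendsto_atTop_ciSup _ (aux_bdd h0 h1 y)
    exact monotone_nat_of_le_succ fun m => le_max_left _ _
  have h2 : Filter.Tendsto (fun m => θ * ∑ i, tnormAux θ S m (tsProj (E i) x)) Filter.atTop
      (nhds (θ * ∑ i, tnorm θ S (tsProj (E i) x))) :=
    (tendsto_finsetSum _ fun i _ => ht _).const_mul θ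
  exact le_of_tendsto' h2 fun m => (aux_adm h0 h1 m x hE).trans (aux_le_tnorm h0 h1 _ x)

lemma tnorm_le (h0 : 0 ≤ θ) (h1 : θ ≤ 1) (x : ℕ+ →₀ ℝ) (C : ℝ) (hC : ∀ i, |x i| ≤ C)
    (hE : ∀ (d : ℕ) (E : Fin d → Finset ℕ+), TsAdmissible S E →
      θ * ∑ i, tnorm θ S (tsProj (E i) x) ≤ C) : tnorm θ S x ≤ C := by
  have hC0 : 0 ≤ C := (abs_nonneg _).trans (hC 1)
  refine ciSup_le fun m => ?_
  induction m with
  | zero => exact ciSup_le hC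
  | succ m ih =>
    refine max_le ih (Real.sSup_le ?_ hC0)
    rintro r ⟨d, E, hE', rfl⟩
    refine le_trans ?_ (hE d E hE')
    exact mul_le_mul_of_nonneg_left (Finset.sum_le_sum fun i _ => aux_le_tnorm h0 h1 m _) h0

lemma aux_mono (h0 : 0 ≤ θ) (h1 : θ ≤ 1) (m : ℕ) : ∀ x y : ℕ+ →₀ ℝ, (∀ i, |y i| ≤ |x i|) →
    tnormAux θ S m y ≤ tnormAux θ S m x := by
  induction m with
  | zero =>
    intro x y h
    refine ciSup_le fun i => (h i).trans ?_
    refine le_ciSup (f := fun i => |x i|) ⟨tsL1 x, ?_⟩ i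
    rintro _ ⟨m, rfl⟩
    exact coord_le_tsL1 x m
  | succ m ih =>
    intro x y h
    refine max_le ((ih x y h).trans (le_max_left _ _)) (Real.sSup_le ?_ (aux_nonneg _ _))
    rintro r ⟨d, E, hE, rfl⟩
    refine le_trans ?_ (aux_adm h0 h1 m x hE)
    refine mul_le_mul_of_nonneg_left (Finset.sum_le_sum fun i _ => ih _ _ fun j => ?_) h0
    rw [tsProj_apply, tsProj_apply]
    split_ifs
    · exact h j
    · exact le_rfl

lemma tnorm_mono (h0 : 0 ≤ θ) (h1 : θ ≤ 1) (x y : ℕ+ →₀ ℝ) (h : ∀ i, |y i| ≤ |x i|) :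
    tnorm θ S y ≤ tnorm θ S x :=
  ciSup_le fun m => (aux_mono h0 h1 m x y h).trans (aux_le_tnorm h0 h1 m x)

lemma tnorm_nonneg (h0 : 0 ≤ θ) (h1 : θ ≤ 1) (x : ℕ+ →₀ ℝ) : 0 ≤ tnorm θ S x :=
  (abs_nonneg _).trans (coord_le_tnorm h0 h1 x 1)

/-- finset version of the lower estimate -/
lemma tnorm_adm' (h0 : 0 ≤ θ) (h1 : θ ≤ 1) (x : ℕ+ →₀ ℝ) (F : Finset ℕ+) (hF : F ∈ S)
    (E : ℕ+ → Finset ℕ+) (hl : ∀ a ∈ F, IsLeast (↑(E a) : Set ℕ+) a)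
    (hlt : ∀ a ∈ F, ∀ b ∈ F, a < b → ∀ u ∈ E a, ∀ v ∈ E b, u < v) :
    θ * ∑ a ∈ F, tnorm θ S (tsProj (E a) x) ≤ tnorm θ S x := by
  classical
  let o := F.orderEmbOfFin rfl
  have ho : ∀ i, o i ∈ F := F.orderEmbOfFin_mem rfl
  have him : Finset.univ.image o = F := by
    apply Finset.coe_injective
    simp [o]
  have hadm : TsAdmissible S (fun i => E (o i)) := by
    refine ⟨fun i => ⟨o i, (hl _ (ho i)).1⟩, fun i j hij => ?_, o, fun i => hl _ (ho i), ?_⟩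
    · exact hlt _ (ho i) _ (ho j) (o.strictMono hij)
    · rw [him]; exact hF
  have := tnorm_adm h0 h1 x hadm
  have h2 : ∑ a ∈ F, tnorm θ S (tsProj (E a) x) = ∑ i, tnorm θ S (tsProj (E (o i)) x) := by
    conv_lhs => rw [← him]
    rw [Finset.sum_image]
    intro a _ b _ h
    exact o.injective h
  rw [h2]; exact this

lemma tnorm_le_max (h0 : 0 ≤ θ) (h1 : θ ≤ 1) (x : ℕ+ →₀ ℝ) (C : ℝ) (hC : ∀ i, |x i| ≤ C) :
    tnorm θ S x ≤ max C (θ * tsL1 x) := by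
  refine tnorm_le h0 h1 x _ (fun i => (hC i).trans (le_max_left _ _)) fun d E hE => ?_
  refine le_trans ?_ (le_max_right _ _)
  refine mul_le_mul_of_nonneg_left ?_ h0
  exact (Finset.sum_le_sum fun i _ => tnorm_le_L1 h0 h1 _).trans (adm_sum_L1 hE x)

end

def tsInd (A : Finset ℕ+) : ℕ+ →₀ ℝ :=
  Finsupp.onFinset A (fun i => if i ∈ A then 1 else 0) (by intro a; simp)

lemma tsInd_apply (A : Finset ℕ+) (i : ℕ+) : tsInd A i = if i ∈ A then 1 else 0 := rfl

lemma tsL1_ind (A : Finset ℕ+) : tsL1 (tsInd A) = A.card := by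
  rw [tsL1_eq (tsInd A) A Finsupp.support_onFinset_subset]
  rw [Finset.sum_congr rfl (g := fun _ => (1 : ℝ))]
  · simp
  · intro i hi; simp [tsInd_apply, hi]

lemma tsProj_ind (E A : Finset ℕ+) : tsProj E (tsInd A) = tsInd (A ∩ E) := by
  ext i
  simp only [tsProj_apply, tsInd_apply, Finset.mem_inter]
  split_ifs <;> simp_all

section
variable {θ : ℝ} {S : Set (Finset ℕ+)}

lemma tnorm_ind_le (h0 : 0 ≤ θ) (h1 : θ ≤ 1) (A : Finset ℕ+) :
    tnorm θ S (tsInd A) ≤ max 1 (θ * A.card) := by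
  rw [← tsL1_ind]
  apply tnorm_le_max h0 h1
  intro i
  rw [tsInd_apply]
  split_ifs <;> simp

lemma tnorm_ind_ge (h0 : 0 ≤ θ) (h1 : θ ≤ 1) (A : Finset ℕ+) (hA : A ∈ S) :
    θ * A.card ≤ tnorm θ S (tsInd A) := by
  classical
  have h := tnorm_adm' h0 h1 (tsInd A) A hA (fun a => {a}) (by intro a _; simp)
    (by intro a _ b _ hab u hu v hv; simp at hu hv; rwa [hu, hv])
  refine le_trans (mul_le_mul_of_nonneg_left ?_ h0) h
  have : (A.card : ℝ) = ∑ a ∈ A, (1 : ℝ) := by simp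
  rw [this]
  apply Finset.sum_le_sum
  intro a ha
  have := coord_le_tnorm (S := S) h0 h1 (tsProj {a} (tsInd A)) a
  simpa [tsProj_apply, tsInd_apply, ha] using this

lemma tnorm_ind_notin (h0 : 0 ≤ θ) (h1 : θ ≤ 1 / 2) (n : ℕ) (G : Finset ℕ+)
    (hG : G ∉ Schreier (n + 1)) :
    tnorm θ (Schreier (n + 1)) (tsInd G) ≤ max 1 (θ * (G.card - 1)) := by
  classical
  have h1' : θ ≤ 1 := by linarith
  refine tnorm_le h0 h1' _ _ ?_ ?_
  · intro i
    refine le_trans ?_ (le_max_left _ _)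
    rw [tsInd_apply]
    split_ifs <;> simp
  intro d E hE
  refine le_trans (mul_le_mul_of_nonneg_left ?_ h0) (le_max_right _ _)
  simp only [tsProj_ind]
  have hle : ∀ j, tnorm θ (Schreier (n + 1)) (tsInd (G ∩ E j)) ≤ (G ∩ E j).card := by
    intro j
    have := tnorm_le_L1 (S := Schreier (n + 1)) h0 h1' (tsInd (G ∩ E j))
    rwa [tsL1_ind] at this
  have hsum : ∑ j, ((G ∩ E j).card : ℝ) ≤ G.card := by
    have := adm_sum_L1 hE (tsInd G)
    simpa only [tsProj_ind, tsL1_ind] using this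
  by_cases hex : ∃ j, 2 ≤ (G ∩ E j).card
  · obtain ⟨j, hj⟩ := hex
    have h2 : tnorm θ (Schreier (n + 1)) (tsInd (G ∩ E j)) ≤ (G ∩ E j).card - 1 := by
      refine (tnorm_ind_le h0 h1' _).trans (max_le ?_ ?_)
      · have : (2 : ℝ) ≤ (G ∩ E j).card := by exact_mod_cast hj
        linarith
      · have : (2 : ℝ) ≤ (G ∩ E j).card := by exact_mod_cast hj
        nlinarith
    rw [← Finset.add_sum_erase _ _ (Finset.mem_univ j)] at hsum ⊢
    have h3 := Finset.sum_le_sum (s := Finset.univ.erase j) fun i _ => hle i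
    linarith
  · push Not at hex
    by_cases hcov : ∀ a ∈ G, ∃ j, a ∈ E j
    · exfalso
      apply hG
      obtain ⟨hne, hlt, μ, hμ, hmem⟩ := hE
      by_cases hd : G = ∅
      · rw [hd]; exact sch_empty _
      obtain ⟨a0, ha0⟩ := Finset.nonempty_iff_ne_empty.2 hd
      have : Nonempty (Fin d) := ⟨(hcov a0 ha0).choose⟩
      choose! J hJ using hcov
      have hJm : ∀ a ∈ G, ∀ b ∈ G, a < b → J a < J b := by
        intro a ha b hb hab
        rcases lt_trichotomy (J a) (J b) with h | h | h
        · exact h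
        · exfalso
          have h2 := hex (J a)
          have : ({a, b} : Finset ℕ+) ⊆ G ∩ E (J a) := by
            intro x hx
            rw [Finset.mem_insert, Finset.mem_singleton] at hx
            rcases hx with rfl | rfl
            · exact Finset.mem_inter.2 ⟨ha, hJ _ ha⟩
            · exact Finset.mem_inter.2 ⟨hb, h ▸ hJ _ hb⟩
          have h3 := Finset.card_le_card this
          rw [Finset.card_pair hab.ne] at h3
          omega
        · exact absurd (hlt _ _ h b (hJ b hb) a (hJ a ha)) (not_lt.2 hab.le)
      refine sch_dom n _ G (fun a => μ (J a)) hmem ?_ ?_ ?_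
      · intro a _; exact Finset.mem_image_of_mem _ (Finset.mem_univ _)
      · intro a ha; exact (hμ (J a)).2 (hJ a ha)
      · intro a ha b hb hab
        exact hlt _ _ (hJm a ha b hb hab) _ (hμ _).1 _ (hμ _).1
    · push Not at hcov
      obtain ⟨a, ha, hna⟩ := hcov
      have h3 : ∑ j, (((G.erase a) ∩ E j).card : ℝ) ≤ (G.erase a).card := by
        have := adm_sum_L1 hE (tsInd (G.erase a))
        simpa only [tsProj_ind, tsL1_ind] using this
      have h4 : ∀ j, (G.erase a) ∩ E j = G ∩ E j := by
        intro j
        ext x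
        simp only [Finset.mem_inter, Finset.mem_erase]
        constructor
        · rintro ⟨⟨_, h⟩, h'⟩; exact ⟨h, h'⟩
        · rintro ⟨h, h'⟩
          refine ⟨⟨?_, h⟩, h'⟩
          rintro rfl
          exact hna j h'
      simp only [h4] at h3
      rw [Finset.card_erase_of_mem ha, Nat.cast_sub (Finset.card_pos.2 ⟨a, ha⟩)] at h3
      push_cast at h3
      exact (Finset.sum_le_sum fun i _ => hle i).trans h3

lemma tnorm_far (h0 : 0 ≤ θ) (h1 : θ ≤ 1) (n : ℕ) (x : ℕ+ →₀ ℝ) (p N : ℕ+) (hp : 2 ≤ (p : ℕ))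
    (hN : p + 1 ≤ N) (hx : ∀ i, N < i → x i = 0)
    (A : Finset ℕ+) (hA : ∀ a ∈ A, N < a) (hA1 : A ∈ Schreier 1) :
    θ * (|x p| + tnorm θ (Schreier (n + 2)) (tsProj (Finset.Icc (p + 1) N) x) + A.card) ≤
      tnorm θ (Schreier (n + 2)) (x - tsInd A) := by
  classical
  have hpN : p < N := lt_of_lt_of_le (PNat.lt_add_right p 1) hN
  have hF : ({p, p + 1} : Finset ℕ+) ∪ A ∈ Schreier (n + 2) := by
    apply sch_two
    · exact Finset.card_le_two
    · intro a ha
      rw [Finset.mem_insert, Finset.mem_singleton] at ha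
      rcases ha with rfl | rfl
      · exact hp
      · rw [PNat.add_coe]; omega
    · intro a ha
      have : (N : ℕ) < a := hA a ha
      have : (p : ℕ) < N := hpN
      omega
    · intro b hb a ha
      rw [Finset.mem_insert, Finset.mem_singleton] at hb
      rcases hb with rfl | rfl
      · exact hpN.trans (hA a ha)
      · exact hN.trans_lt (hA a ha)
    · exact hA1
  let E : ℕ+ → Finset ℕ+ := fun a => if a = p + 1 then Finset.Icc (p + 1) N else {a}
  have hpp : p ≠ p + 1 := (PNat.lt_add_right p 1).ne
  have hAp : ∀ a ∈ A, a ≠ p + 1 := fun a ha => (hN.trans_lt (hA a ha)).ne'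
  have h := tnorm_adm' h0 h1 (x - tsInd A) _ hF E ?_ ?_
  · refine le_trans (mul_le_mul_of_nonneg_left ?_ h0) h
    rw [Finset.sum_union, Finset.sum_pair hpp]
    · have e1 : tsProj (E (p + 1)) (x - tsInd A) = tsProj (Finset.Icc (p + 1) N) x := by
        ext i
        simp only [E, if_true, tsProj_apply, Finsupp.coe_sub, Pi.sub_apply, tsInd_apply]
        split_ifs with h2 h3
        · exact absurd (hA i h3) (not_lt.2 (Finset.mem_Icc.1 h2).2)
        · simp
        · rfl
      have e2 : |x p| ≤ tnorm θ (Schreier (n + 2)) (tsProj (E p) (x - tsInd A)) := by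
        have := coord_le_tnorm (S := Schreier (n + 2)) h0 h1 (tsProj (E p) (x - tsInd A)) p
        have h3 : p ∉ A := fun h => absurd (hA p h) (not_lt.2 hpN.le)
        simpa [E, hpp, tsProj_apply, tsInd_apply, h3] using this
      have e3 : (A.card : ℝ) ≤
          ∑ a ∈ A, tnorm θ (Schreier (n + 2)) (tsProj (E a) (x - tsInd A)) := by
        have : (A.card : ℝ) = ∑ a ∈ A, (1 : ℝ) := by simp
        rw [this]
        apply Finset.sum_le_sum
        intro a ha
        have := coord_le_tnorm (S := Schreier (n + 2)) h0 h1 (tsProj (E a) (x - tsInd A)) a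
        simpa [E, hAp a ha, tsProj_apply, tsInd_apply, ha, hx a (hA a ha)] using this
      rw [e1]
      linarith
    · rw [Finset.disjoint_left]
      intro a ha hb
      have := hA a hb
      rw [Finset.mem_insert, Finset.mem_singleton] at ha
      rcases ha with rfl | rfl
      · exact absurd this (not_lt.2 hpN.le)
      · exact absurd this (not_lt.2 hN)
  · intro a _
    simp only [E]
    split_ifs with h2
    · rw [h2, Finset.coe_Icc]
      exact isLeast_Icc hN
    · simp
  · intro a ha b hb hab u hu v hv
    simp only [E] at hu hv
    split_ifs at hu with h2
    · rw [if_neg (by rintro rfl; exact absurd h2 hab.ne), Finset.mem_singleton] at hv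
      subst hv
      refine (Finset.mem_Icc.1 hu).2.trans_lt (hA _ ?_)
      rcases Finset.mem_union.1 hb with h3 | h3
      · exfalso
        rw [Finset.mem_insert, Finset.mem_singleton] at h3
        rcases h3 with rfl | rfl
        · rw [h2] at hab; exact absurd hab (not_lt.2 (PNat.lt_add_right _ 1).le)
        · exact absurd h2 hab.ne
      · exact h3
    · rw [Finset.mem_singleton] at hu
      subst hu
      split_ifs at hv with h3
      · rw [h3] at hab
        exact hab.trans_le (Finset.mem_Icc.1 hv).1
      · rw [Finset.mem_singleton] at hv
        rwa [hv]

lemma tnorm_e1 (h0 : 0 ≤ θ) (h1 : θ ≤ 1 / 2) (n : ℕ) (x : ℕ+ →₀ ℝ) :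
    tnorm θ (Schreier (n + 1)) x ≤ max |x 1| (tnorm θ (Schreier (n + 1)) (x.erase 1)) := by
  classical
  have h1' : θ ≤ 1 := by linarith
  set T := tnorm θ (Schreier (n + 1)) with hT
  have hnn : 0 ≤ T x := tnorm_nonneg h0 h1' x
  have key : T x ≤ max (max |x 1| (T (x.erase 1))) (θ * T x) := by
    refine tnorm_le h0 h1' _ _ ?_ ?_
    · intro i
      refine le_trans ?_ (le_max_left _ _)
      by_cases hi : i = 1
      · rw [hi]; exact le_max_left _ _
      · refine le_trans ?_ (le_max_right _ _)
        have := coord_le_tnorm (S := Schreier (n + 1)) h0 h1' (x.erase 1) i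
        rwa [Finsupp.erase_ne hi] at this
    · intro d E hE
      by_cases hex : ∃ j, 1 ∈ E j
      · refine le_trans ?_ (le_max_right _ _)
        refine mul_le_mul_of_nonneg_left ?_ h0
        obtain ⟨j, hj⟩ := hex
        have hall : ∀ i, i = j := by
          intro i
          obtain ⟨hne, hlt, μ, hμ, hmem⟩ := id hE
          have hμj : μ j = 1 := le_antisymm ((hμ j).2 hj) (one_le)
          have hc := sch_one_mem n _ hmem (by
            rw [← hμj]; exact Finset.mem_image_of_mem _ (Finset.mem_univ _))
          rw [Finset.card_le_one] at hc
          have := hc (μ i) (Finset.mem_image_of_mem _ (Finset.mem_univ _))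
            (μ j) (Finset.mem_image_of_mem _ (Finset.mem_univ _))
          have h2 := (hμ i).1
          rw [this] at h2
          exact adm_uniq hE h2 (hμ j).1
        rw [Fintype.sum_eq_single j (fun i hi => absurd (hall i) hi)]
        apply tnorm_mono h0 h1'
        intro i
        rw [tsProj_apply]
        split_ifs <;> simp
      · refine le_trans ?_ (le_max_left _ _)
        refine le_trans ?_ (le_max_right _ _)
        have h2 : ∀ j, tsProj (E j) x = tsProj (E j) (x.erase 1) := by
          intro j
          ext i
          rw [tsProj_apply, tsProj_apply]
          split_ifs with h3
          · rw [Finsupp.erase_ne]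
            rintro rfl
            exact hex ⟨j, h3⟩
          · rfl
        simp only [h2]
        exact tnorm_adm h0 h1' _ hE
  rcases le_max_iff.1 key with h | h
  · exact h
  · have : T x = 0 := by nlinarith
    rw [this]
    exact le_max_of_le_left (abs_nonneg _)

lemma tnorm_add_single (h0 : 0 ≤ θ) (h1 : θ ≤ 1)
    (htri : ∀ x y, tnorm θ S (x + y) ≤ tnorm θ S x + tnorm θ S y)
    (x : ℕ+ →₀ ℝ) (i : ℕ+) (t : ℝ) :
    tnorm θ S (x + Finsupp.single i t) ≤ max |x i + t| (tnorm θ S x + θ * |t|) := by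
  classical
  refine tnorm_le h0 h1 _ _ ?_ ?_
  · intro l
    by_cases hl : l = i
    · subst hl
      refine le_trans ?_ (le_max_left _ _)
      simp
    · refine le_trans ?_ (le_max_right _ _)
      have := coord_le_tnorm (S := S) h0 h1 x l
      rw [Finsupp.add_apply, Finsupp.single_eq_of_ne hl, add_zero]
      have : 0 ≤ θ * |t| := mul_nonneg h0 (abs_nonneg _)
      linarith
  · intro d E hE
    refine le_trans ?_ (le_max_right _ _)
    have hsplit : ∀ j, tsProj (E j) (x + Finsupp.single i t) =
        tsProj (E j) x + tsProj (E j) (Finsupp.single i t) := by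
      intro j
      ext l
      simp only [tsProj_apply, Finsupp.add_apply]
      split_ifs <;> simp
    have hL : tsL1 (Finsupp.single i t) ≤ |t| := by
      rw [tsL1_eq _ {i} Finsupp.support_single_subset]
      simp
    have h2 : ∑ j, tnorm θ S (tsProj (E j) (x + Finsupp.single i t)) ≤
        ∑ j, tnorm θ S (tsProj (E j) x) + |t| := by
      refine le_trans (Finset.sum_le_sum (g := fun j => tnorm θ S (tsProj (E j) x) +
        tsL1 (tsProj (E j) (Finsupp.single i t))) fun j _ => ?_) ?_
      · rw [hsplit]
        exact (htri _ _).trans (add_le_add le_rfl (tnorm_le_L1 h0 h1 _))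
      · rw [Finset.sum_add_distrib]
        have := adm_sum_L1 hE (Finsupp.single i t)
        linarith
    have h3 := mul_le_mul_of_nonneg_left h2 h0
    have h4 := tnorm_adm h0 h1 x hE
    rw [mul_add] at h3
    linarith

end


section
variable {X : Type*} [NormedAddCommGroup X] [NormedSpace ℝ X]

structure TsF (θ : ℝ) (n : ℕ) (e : ℕ+ → X) (co : X → ℕ+ → ℝ) : Prop where
  add : ∀ x y i, co (x + y) i = co x i + co y i
  smul : ∀ (c : ℝ) x i, co (c • x) i = c * co x i
  self : ∀ i j, co (e i) j = if j = i then 1 else 0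
  bound : ∀ x i, |co x i| ≤ ‖x‖
  ext : ∀ x y, (∀ i, co x i = co y i) → x = y
  mono : ∀ x y, (∀ i, |co y i| ≤ |co x i|) → ‖y‖ ≤ ‖x‖
  n2 : ∀ x i t, ‖x + t • e i‖ ≤ max |co x i + t| (‖x‖ + θ * |t|)
  e1 : ∀ x, ‖x‖ ≤ max |co x 1| ‖x - co x 1 • e 1‖
  ind : ∀ A : Finset ℕ+, ‖∑ i ∈ A, e i‖ = tnorm θ (Schreier n) (tsInd A)
  far : ∀ x (p : ℕ+), 2 ≤ (p : ℕ) → (∀ j, j < p → co x j = 0) → ∀ ε, 0 < ε → ∃ N0 : ℕ+,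
    ∀ A : Finset ℕ+, A ∈ Schreier 1 → (∀ a ∈ A, N0 < a) →
      θ * (|co x p| + ‖x - co x p • e p‖ + A.card) - ε ≤ ‖x - ∑ a ∈ A, e a‖

def tsTrunc (a : ℕ+ → ℝ) (A : Finset ℕ+) : ℕ+ →₀ ℝ :=
  Finsupp.onFinset A (fun i => if i ∈ A then a i else 0) (by intro a; simp; tauto)

lemma tsTrunc_apply (a : ℕ+ → ℝ) (A : Finset ℕ+) (i : ℕ+) :
    tsTrunc a A i = if i ∈ A then a i else 0 := rfl

lemma emb_trunc (e : ℕ+ → X) (a : ℕ+ → ℝ) (A : Finset ℕ+) :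
    Finsupp.linearCombination ℝ e (tsTrunc a A) = ∑ i ∈ A, a i • e i := by
  have hs : (tsTrunc a A).support ⊆ A := Finsupp.support_onFinset_subset
  rw [Finsupp.linearCombination_apply, Finsupp.sum_of_support_subset _ hs _ (by simp)]
  refine Finset.sum_congr rfl fun i hi => ?_
  rw [tsTrunc_apply, if_pos hi]

theorem exists_TsF {θ : ℝ} (h0 : 0 ≤ θ) (h1 : θ ≤ 1 / 2) (n : ℕ) (e : ℕ+ → X)
    (hX : IsTsirelsonSpace θ (n + 2) X e) : ∃ co : X → ℕ+ → ℝ, TsF θ (n + 2) e co := by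
  classical
  have h1' : θ ≤ 1 := by linarith
  choose co hco huniq using hX.expansion
  simp only at hco huniq
  set T := tnorm θ (Schreier (n + 2)) with hT
  set ι := Finsupp.linearCombination ℝ e with hι
  have hn : ∀ a, ‖ι a‖ = T a := by
    intro a
    rw [hι, Finsupp.linearCombination_apply]
    exact hX.norm_embed a
  have htri : ∀ a b, T (a + b) ≤ T a + T b := by
    intro a b
    rw [← hn, ← hn, ← hn, map_add]
    exact norm_add_le _ _
  have hlim : ∀ x, Filter.Tendsto (fun A => ι (tsTrunc (co x) A)) Filter.atTop (nhds x) := by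
    intro x
    simp only [hι, emb_trunc]
    exact hco x
  have hTl : ∀ x, Filter.Tendsto (fun A => T (tsTrunc (co x) A)) Filter.atTop (nhds ‖x‖) := by
    intro x
    simp only [← hn]
    exact (hlim x).norm
  have hadd : ∀ x y i, co (x + y) i = co x i + co y i := by
    intro x y i
    have := huniq (x + y) (fun i => co x i + co y i) (by
      simp only [add_smul]
      exact (hco x).add (hco y))
    rw [← this]
  have hsmul : ∀ (c : ℝ) x i, co (c • x) i = c * co x i := by
    intro c x i
    have := huniq (c • x) (fun i => c * co x i) (by
      simp only [mul_smul]
      exact (hco x).const_smul c)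
    rw [← this]
  have hself : ∀ i j, co (e i) j = if j = i then 1 else 0 := by
    intro i j
    have := huniq (e i) (fun j => if j = i then 1 else 0) (by
      convert hasSum_ite_eq i (e i) using 2 with j
      split_ifs with h
      · rw [h, one_smul]
      · rw [zero_smul])
    rw [← this]
  have hsub : ∀ x i (t : ℝ), co (x - t • e i) i = co x i - t := by
    intro x i t
    rw [sub_eq_add_neg, ← neg_smul, hadd, hsmul, hself]; simp; ring
  have hsub' : ∀ x i (t : ℝ) j, j ≠ i → co (x - t • e i) j = co x j := by
    intro x i t j hj
    rw [sub_eq_add_neg, ← neg_smul, hadd, hsmul, hself]; simp [hj]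
  refine ⟨co, hadd, hsmul, hself, ?_, ?_, ?_, ?_, ?_, ?_, ?_⟩
  · intro x i
    refine ge_of_tendsto (hTl x) ?_
    filter_upwards [Filter.eventually_ge_atTop {i}] with A hA
    have := coord_le_tnorm (S := Schreier (n + 2)) h0 h1' (tsTrunc (co x) A) i
    rwa [tsTrunc_apply, if_pos (hA (by simp))] at this
  · intro x y h
    have := (hco x)
    rw [show co x = co y from funext h] at this
    exact this.unique (hco y)
  · intro x y h
    refine le_of_tendsto_of_tendsto' (hTl y) (hTl x) fun A => tnorm_mono h0 h1' _ _ fun i => ?_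
    rw [tsTrunc_apply, tsTrunc_apply]
    split_ifs
    · exact h i
    · exact le_rfl
  · intro x i t
    refine le_of_tendsto_of_tendsto (hTl (x + t • e i))
      (tendsto_const_nhds.max ((hTl x).add_const _)) ?_
    filter_upwards [Filter.eventually_ge_atTop {i}] with A hA
    have := tnorm_add_single h0 h1' htri (tsTrunc (co x) A) i t
    rw [tsTrunc_apply, if_pos (hA (by simp))] at this
    refine Eq.trans_le ?_ this
    rw [hT]
    congr 1
    ext j
    rw [Finsupp.add_apply, tsTrunc_apply, tsTrunc_apply, hadd, hsmul, hself, Finsupp.single_apply]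
    by_cases hj : j = i
    · subst hj; rw [if_pos (hA (by simp)), if_pos (hA (by simp))]; simp
    · simp [hj, Ne.symm hj]
  · intro x
    refine le_of_tendsto_of_tendsto (hTl x)
      (tendsto_const_nhds.max (hTl (x - co x 1 • e 1))) ?_
    filter_upwards [Filter.eventually_ge_atTop {1}] with A hA
    have := tnorm_e1 h0 h1 (n + 1) (tsTrunc (co x) A)
    rw [tsTrunc_apply, if_pos (hA (by simp))] at this
    refine this.trans (le_of_eq ?_)
    rw [hT]
    congr 2
    ext j
    rw [Finsupp.erase_apply, tsTrunc_apply, tsTrunc_apply]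
    by_cases hj : j = 1
    · subst hj; rw [hsub]; simp
    · rw [hsub' _ _ _ _ hj]; simp [hj]
  · intro A
    rw [← hT, ← hn]
    congr 1
    have : tsInd A = tsTrunc (fun _ => 1) A := rfl
    rw [this, hι, emb_trunc]; simp
  · intro x p hp hx0 ε hε
    have hev := (Metric.tendsto_nhds.1 (hlim x)) (ε / 2) (by positivity)
    obtain ⟨B, hB⟩ := Filter.eventually_atTop.1 hev
    obtain ⟨M, hM⟩ := B.bddAbove
    let N := max M (p + 1)
    have hBN : B ⊆ Finset.Icc 1 N := by
      intro b hb
      rw [Finset.mem_Icc]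
      exact ⟨one_le, (hM hb).trans (le_max_left _ _)⟩
    have hd := hB _ hBN
    set z := tsTrunc (co x) (Finset.Icc 1 N) with hz
    have hpN : p + 1 ≤ N := le_max_right _ _
    have hpN' : p ≤ N := (PNat.lt_add_right p 1).le.trans hpN
    refine ⟨N, fun A hA1 hA => ?_⟩
    have hzp : z p = co x p := by rw [hz, tsTrunc_apply, if_pos (by simp [hpN'])]
    have key := tnorm_far h0 h1' n z p N hp hpN (by
      intro i hi
      rw [hz, tsTrunc_apply, if_neg]
      simp [hi]) A hA hA1
    rw [hzp, ← hT, ← hn, ← hn, map_sub] at key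
    have e1 : ι (tsInd A) = ∑ a ∈ A, e a := by
      have : tsInd A = tsTrunc (fun _ => 1) A := rfl
      rw [this, hι, emb_trunc]; simp
    have e2 : tsProj (Finset.Icc (p + 1) N) z = z - Finsupp.single p (co x p) := by
      ext j
      rw [tsProj_apply, Finsupp.sub_apply, Finsupp.single_apply]
      rcases lt_trichotomy j p with h | h | h
      · rw [if_neg, if_neg h.ne', hz, tsTrunc_apply, hx0 j h]
        · simp
        · rw [Finset.mem_Icc]; intro h2
          exact absurd (h.trans (PNat.lt_add_right p 1)) (not_lt.2 h2.1)
      · subst h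
        rw [if_neg, if_pos rfl, hzp, sub_self]
        simp
      · rw [if_neg h.ne, sub_zero, hz, tsTrunc_apply]
        have : p + 1 ≤ j := PNat.add_one_le_iff.2 h
        by_cases h2 : j ≤ N
        · simp [this, h2]
        · simp [h2]
    rw [e1, e2, map_sub] at key
    have e3 : ι (Finsupp.single p (co x p)) = co x p • e p := by
      rw [hι, Finsupp.linearCombination_single]
    rw [e3] at key
    rw [dist_eq_norm] at hd
    have i1 : ‖ι z - ∑ a ∈ A, e a‖ ≤ ‖x - ∑ a ∈ A, e a‖ + ‖ι z - x‖ := by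
      have := norm_add_le (x - ∑ a ∈ A, e a) (ι z - x)
      refine Eq.trans_le (congrArg norm ?_) this
      abel
    have i2 : ‖x - co x p • e p‖ ≤ ‖ι z - co x p • e p‖ + ‖ι z - x‖ := by
      have := norm_sub_le (ι z - co x p • e p) (ι z - x)
      refine Eq.trans_le (congrArg norm ?_) this
      abel
    nlinarith [norm_nonneg (ι z - x)]

end

lemma perm_id {θ : ℝ} (k : ℕ) (hk : 2 ≤ k) (hθ : θ * k = 1) (h0 : 0 < θ) (h1 : θ ≤ 1 / 2) (n : ℕ)
    (π : ℕ+ → ℕ+) (hinj : Function.Injective π) (hπ1 : π 1 = 1)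
    (hG : ∀ G : Finset ℕ+, 1 ∉ G → tnorm θ (Schreier (n + 2)) (tsInd (G.image π)) ≤
      tnorm θ (Schreier (n + 2)) (tsInd G)) : ∀ i, π i = i := by
  classical
  have h1' : θ ≤ 1 := by linarith
  by_cases hall : ∀ i, π i ≤ i
  · intro i
    induction i using PNat.strongInductionOn with
    | _ i ih =>
      by_contra hne
      exact hne (hinj (ih _ (lt_of_le_of_ne (hall i) hne)))
  exfalso
  push Not at hall
  obtain ⟨m, hm⟩ := hall
  have hm1 : m ≠ 1 := by rintro rfl; rw [hπ1] at hm; exact lt_irrefl _ hm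
  have hm2 : 2 ≤ (m : ℕ) := by
    have : 1 < m := lt_of_le_of_ne one_le (Ne.symm hm1)
    exact_mod_cast this
  have hnx : ∀ N : ℕ+, ∃ a, N < a ∧ a ≤ π a := by
    intro N
    by_contra hcon
    push Not at hcon
    obtain ⟨K, hK⟩ := ((Finset.Icc 1 N).image π).bddAbove
    let M : ℕ+ := max K N + 1
    have hmaps : ∀ a ∈ Finset.Icc 1 M, π a ∈ Finset.Ico 1 M := by
      intro a ha
      rw [Finset.mem_Icc] at ha
      rw [Finset.mem_Ico]
      refine ⟨one_le, ?_⟩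
      by_cases h : a ≤ N
      · have : π a ≤ K := hK (by
          simp only [Finset.coe_image, Set.mem_image]
          exact ⟨a, by simp [h], rfl⟩)
        exact lt_of_le_of_lt (this.trans (le_max_left _ _)) (PNat.lt_add_right _ 1)
      · exact (hcon a (not_le.1 h)).trans_le ha.2
    have := Finset.card_le_card_of_injOn π hmaps (hinj.injOn)
    rw [PNat.card_Icc, PNat.card_Ico] at this
    have hM := M.pos
    simp at this
    omega
  choose nx hnx1 hnx2 using hnx
  let kp : ℕ+ := ⟨k, by omega⟩
  let f : ℕ → ℕ+ := fun i => Nat.rec m (fun _ x => nx (max (max x (π x)) kp)) i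
  have hf0 : f 0 = m := rfl
  have hfs : ∀ i, f (i + 1) = nx (max (max (f i) (π (f i))) kp) := fun i => rfl
  have hmono : StrictMono f := by
    apply strictMono_nat_of_lt_succ
    intro i
    rw [hfs]
    exact lt_of_le_of_lt ((le_max_left _ _).trans (le_max_left _ _)) (hnx1 _)
  have hle : ∀ i, f i ≤ π (f i) := by
    intro i
    cases i with
    | zero => exact hm.le
    | succ i => rw [hfs]; exact hnx2 _
  have hmono' : StrictMono (fun i => π (f i)) := by
    apply strictMono_nat_of_lt_succ
    intro i
    refine lt_of_lt_of_le ?_ (hle (i + 1))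
    rw [hfs]
    exact lt_of_le_of_lt ((le_max_right _ _).trans (le_max_left _ _)) (hnx1 _)
  have hfk : ∀ i, k < (f (i + 1) : ℕ) := by
    intro i
    rw [hfs]
    have : kp < nx (max (max (f i) (π (f i))) kp) := lt_of_le_of_lt (le_max_right _ _) (hnx1 _)
    exact_mod_cast this
  have hex := sch_noinf (n + 1) f hmono
  have hr := Nat.find_spec hex
  have hmin := fun m => Nat.find_min hex (m := m)
  set r := Nat.find hex with hrdef
  clear_value r
  set G := (Finset.range r).image f with hGdef
  have hcard : G.card = r := by
    rw [hGdef, Finset.card_image_of_injective _ hmono.injective, Finset.card_range]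
  have hrk : k + 2 ≤ r := by
    by_contra hlt
    apply hr
    have hs := sch_two n {m} ((Finset.range k).image fun i => f (i + 1)) (by simp)
      (by simpa using hm2)
      (by
        intro a ha
        obtain ⟨i, _, rfl⟩ := Finset.mem_image.1 ha
        have := hfk i; omega)
      (by
        intro b hb a ha
        obtain ⟨i, _, rfl⟩ := Finset.mem_image.1 ha
        rw [Finset.mem_singleton.1 hb, ← hf0]
        exact hmono (Nat.succ_pos _))
      (by
        rw [sch_one_iff]
        intro a ha
        obtain ⟨i, _, rfl⟩ := Finset.mem_image.1 ha
        have h2 := hfk i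
        have h3 : ((Finset.range k).image fun i => f (i + 1)).card ≤ (Finset.range k).card :=
          Finset.card_image_le
        rw [Finset.card_range] at h3
        omega)
    refine sch_sub (n + 1) hs ?_
    intro a ha
    obtain ⟨i, hi, rfl⟩ := Finset.mem_image.1 ha
    rw [Finset.mem_range] at hi
    rw [Finset.mem_union]
    cases i with
    | zero => left; simp [hf0]
    | succ i =>
      right
      exact Finset.mem_image.2 ⟨i, by rw [Finset.mem_range]; omega, rfl⟩
  obtain ⟨r', hr'⟩ : ∃ r', r = r' + 1 := ⟨r - 1, by omega⟩
  have hin : (Finset.range r').image f ∈ Schreier (n + 2) := by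
    by_contra h
    exact hmin r' (by omega) h
  have hpush := sch_push n f (fun i => π (f i)) hmono hmono' hle hm r' (by omega) hin
  have hGi : G.image π = (Finset.range (r' + 1)).image (fun i => π (f i)) := by
    rw [hGdef, Finset.image_image, hr']; rfl
  rw [← hGi] at hpush
  have g1 := tnorm_ind_ge h0.le h1' _ hpush
  rw [Finset.card_image_of_injective _ hinj, hcard] at g1
  have hG1 : 1 ∉ G := by
    intro h
    obtain ⟨i, _, hi⟩ := Finset.mem_image.1 h
    have : m ≤ f i := hmono.monotone (Nat.zero_le i)
    rw [hi] at this
    exact hm1 (le_antisymm this one_le)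
  have g2 := hG G hG1
  have g3 := tnorm_ind_notin h0.le h1 (n + 1) G hr
  rw [hcard] at g3
  have g4 := g1.trans (g2.trans g3)
  have hrk' : (k : ℝ) + 2 ≤ r := by exact_mod_cast hrk
  rcases le_max_iff.1 g4 with h | h
  · nlinarith
  · nlinarith

section
variable {X : Type*} [NormedAddCommGroup X] [NormedSpace ℝ X]
variable {θ : ℝ} {n : ℕ} {e : ℕ+ → X} {co : X → ℕ+ → ℝ}

lemma TsF.neg (F : TsF θ n e co) (x : X) (i : ℕ+) : co (-x) i = - co x i := by
  have := F.smul (-1) x i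
  rw [neg_one_smul] at this
  rw [this]; ring

lemma TsF.sub (F : TsF θ n e co) (x y : X) (i : ℕ+) : co (x - y) i = co x i - co y i := by
  rw [sub_eq_add_neg, F.add, F.neg]; ring

lemma TsF.zero (F : TsF θ n e co) (i : ℕ+) : co 0 i = 0 := by
  have := F.smul 0 0 i
  simpa using this

lemma TsF.se (F : TsF θ n e co) (c : ℝ) (i j : ℕ+) : co (c • e i) j = if j = i then c else 0 := by
  rw [F.smul, F.self]; split_ifs <;> simp

lemma TsF.sum (F : TsF θ n e co) (A : Finset ℕ+) (j : ℕ+) :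
    co (∑ a ∈ A, e a) j = if j ∈ A then 1 else 0 := by
  classical
  induction A using Finset.induction_on with
  | empty => simp [F.zero]
  | insert a A ha ih =>
    rw [Finset.sum_insert ha, F.add, ih, F.self]
    by_cases h : j = a
    · subst h; simp [ha]
    · simp [h]

lemma TsF.ind1 (F : TsF θ n e co) {k : ℕ} (h0 : 0 < θ) (h1 : θ ≤ 1 / 2) (hθ : θ * k = 1)
    (A : Finset ℕ+) (hA : A.Nonempty) (hc : A.card ≤ k) : ‖∑ a ∈ A, e a‖ = 1 := by
  apply le_antisymm
  · rw [F.ind]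
    refine (tnorm_ind_le h0.le (by linarith) A).trans (max_le le_rfl ?_)
    rw [← hθ]
    have : (A.card : ℝ) ≤ k := by exact_mod_cast hc
    gcongr
  · obtain ⟨a, ha⟩ := hA
    have := F.bound (∑ a ∈ A, e a) a
    rw [F.sum, if_pos ha] at this
    simpa using this

lemma TsF.norm_e (F : TsF θ n e co) {k : ℕ} (hk : 2 ≤ k) (h0 : 0 < θ) (h1 : θ ≤ 1 / 2)
    (hθ : θ * k = 1) (i : ℕ+) : ‖e i‖ = 1 := by
  have := F.ind1 h0 h1 hθ {i} (by simp) (by simp; omega)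
  simpa using this

lemma TsF.norm_ee (F : TsF θ n e co) {k : ℕ} (hk : 2 ≤ k) (h0 : 0 < θ) (h1 : θ ≤ 1 / 2)
    (hθ : θ * k = 1) (i j : ℕ+) (hij : i ≠ j) (c d : ℝ) (hc : |c| ≤ 1) (hd : |d| ≤ 1) :
    ‖c • e i + d • e j‖ ≤ 1 := by
  classical
  have := F.ind1 h0 h1 hθ {i, j} (by simp) (by rw [Finset.card_pair hij]; exact hk)
  rw [← this]
  apply F.mono
  intro l
  rw [F.sum, F.add, F.se, F.se]
  by_cases h : l = i
  · subst h; simp [hij, hc]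
  · by_cases h' : l = j
    · subst h'; simp [h, hd]
    · simp [h, h']

lemma farset (k : ℕ) (hk : 2 ≤ k) (N : ℕ+) :
    ∃ A : Finset ℕ+, A.card = k ∧ A ∈ Schreier 1 ∧ A.Nonempty ∧ ∀ a ∈ A, N < a := by
  let kp : ℕ+ := ⟨k, by omega⟩
  have hc : (Finset.Ioc (N + kp) (N + kp + kp)).card = k := by
    rw [PNat.card_Ioc]
    push_cast
    simp [kp]
  refine ⟨Finset.Ioc (N + kp) (N + kp + kp), hc, ?_, ?_, ?_⟩
  · rw [sch_one_iff, hc]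
    intro a ha
    have h2 : N + kp < a := (Finset.mem_Ioc.1 ha).1
    have h3 : ((N + kp : ℕ+) : ℕ) < a := by exact_mod_cast h2
    rw [PNat.add_coe] at h3
    have : (kp : ℕ) = k := rfl
    omega
  · rw [← Finset.card_pos, hc]; omega
  · intro a ha
    exact (PNat.lt_add_right N kp).trans (Finset.mem_Ioc.1 ha).1

def FarP (k : ℕ) (P : Finset ℕ+ → Prop) : Prop :=
  ∃ N0 : ℕ+, ∀ A : Finset ℕ+, A.card = k → A ∈ Schreier 1 → (∀ a ∈ A, N0 < a) → P A

lemma FarP.and {k : ℕ} {P Q : Finset ℕ+ → Prop} (hP : FarP k P) (hQ : FarP k Q) :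
    FarP k fun A => P A ∧ Q A := by
  obtain ⟨N, h⟩ := hP
  obtain ⟨M, h'⟩ := hQ
  exact ⟨max N M, fun A h1 h2 h3 => ⟨h A h1 h2 fun a ha => (le_max_left _ _).trans_lt (h3 a ha),
    h' A h1 h2 fun a ha => (le_max_right _ _).trans_lt (h3 a ha)⟩⟩

lemma FarP.exists {k : ℕ} (hk : 2 ≤ k) {P : Finset ℕ+ → Prop} (hP : FarP k P) :
    ∃ A, A.card = k ∧ A.Nonempty ∧ 1 ∉ A ∧ P A := by
  obtain ⟨N, h⟩ := hP
  obtain ⟨A, a1, a2, a3, a4⟩ := farset k hk N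
  exact ⟨A, a1, a3, fun h1 => absurd (a4 1 h1) (not_lt.2 one_le), h A a1 a2 a4⟩

lemma TsF.far1 (F : TsF θ n e co) {k : ℕ} (hθ : θ * k = 1) (x : X) (p : ℕ+)
    (hp : 2 ≤ (p : ℕ)) (hx : ∀ j, j < p → co x j = 0) (ε : ℝ) (hε : 0 < ε) :
    FarP k fun A => 1 + θ * (|co x p| + ‖x - co x p • e p‖) - ε ≤ ‖x - ∑ a ∈ A, e a‖ := by
  obtain ⟨N, h⟩ := F.far x p hp hx ε hε
  refine ⟨N, fun A h1 h2 h3 => ?_⟩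
  have := h A h2 h3
  rw [h1, mul_add, hθ] at this
  linarith

lemma TsF.far2 (F : TsF θ n e co) {k : ℕ} (hk : 2 ≤ k) (h0 : 0 < θ) (h1 : θ ≤ 1 / 2)
    (hθ : θ * k = 1) (x : X) (hx : co x 1 = 0) (ε : ℝ) (hε : 0 < ε) :
    FarP k fun A => 1 + θ * ‖x‖ - ε ≤ ‖x - ∑ a ∈ A, e a‖ := by
  obtain ⟨N, h⟩ := F.far1 hθ x 2 le_rfl (by
    intro j hj
    have : j = 1 := by
      have : (j : ℕ) < 2 := by exact_mod_cast hj
      have h3 := j.pos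
      apply PNat.eq
      rw [PNat.one_coe]
      omega
    rw [this, hx]) ε hε
  refine ⟨N, fun A a1 a2 a3 => le_trans ?_ (h A a1 a2 a3)⟩
  have : ‖x‖ ≤ |co x 2| + ‖x - co x 2 • e 2‖ := by
    have h2 := norm_add_le (co x 2 • e 2) (x - co x 2 • e 2)
    rw [norm_smul, F.norm_e hk h0 h1 hθ] at h2
    simpa using h2
  have := mul_le_mul_of_nonneg_left this h0.le
  linarith

lemma TsF.sub_one_norm (F : TsF θ n e co) (x : X) (c : ℝ) (i : ℕ+) (hc : |co x i + c| ≤ |co x i|) :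
    ‖x + c • e i‖ ≤ ‖x‖ := by
  apply F.mono
  intro l
  rw [F.add, F.se]
  by_cases h : l = i
  · subst h; simpa using hc
  · simp [h]

lemma TsF.erase_norm (F : TsF θ n e co) (x : X) (i : ℕ+) : ‖x - co x i • e i‖ ≤ ‖x‖ := by
  have := F.sub_one_norm x (-co x i) i (by simp)
  rwa [neg_smul, ← sub_eq_add_neg] at this

lemma TsF.e1' (F : TsF θ n e co) (x : X) (c : ℝ) :
    ‖x + c • e 1‖ ≤ max |co x 1 + c| ‖x - co x 1 • e 1‖ := by
  have := F.e1 (x + c • e 1)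
  rw [F.add, F.se, if_pos rfl] at this
  convert this using 3
  module

lemma TsF.norm_c1A (F : TsF θ n e co) {k : ℕ} (h0 : 0 < θ) (h1 : θ ≤ 1 / 2)
    (hθ : θ * k = 1) (A : Finset ℕ+) (hA : A.Nonempty) (hc : A.card = k) (h1A : 1 ∉ A) (c : ℝ)
    (hc1 : |c| ≤ 1) : ‖c • e 1 + ∑ a ∈ A, e a‖ = 1 := by
  have h := F.ind1 h0 h1 hθ A hA hc.le
  apply le_antisymm
  · rw [add_comm]
    refine (F.e1' _ _).trans (max_le ?_ ?_)
    · rw [F.sum, if_neg h1A]; simpa using hc1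
    · rw [← h]; exact F.erase_norm _ _
  · rw [← h]
    apply F.mono
    intro l
    rw [F.add, F.se, F.sum]
    by_cases hl : l = 1
    · subst hl; simp [h1A]
    · simp [hl]

lemma TsF.partA1 (F : TsF θ n e co) {k : ℕ} (hk : 2 ≤ k) (h0 : 0 < θ) (h1 : θ ≤ 1 / 2)
    (hθ : θ * k = 1) (g : X) (hg : g - co g 1 • e 1 ≠ 0) :
    FarP k fun A => ∀ c : ℝ, 1 < ‖(c • e 1 + ∑ a ∈ A, e a) - g‖ := by
  have hpos : 0 < ‖g - co g 1 • e 1‖ := norm_pos_iff.2 hg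
  obtain ⟨N, h⟩ := F.far2 hk h0 h1 hθ (g - co g 1 • e 1) (by rw [F.sub, F.se]; simp)
    (θ * ‖g - co g 1 • e 1‖ / 2) (by positivity)
  refine ⟨N, fun A a1 a2 a3 c => ?_⟩
  have h2 := h A a1 a2 a3
  have h3 : 0 < θ * ‖g - co g 1 • e 1‖ := by positivity
  have h1A : 1 ∉ A := fun h => absurd (a3 1 h) (not_lt.2 one_le)
  refine lt_of_lt_of_le (by linarith) (h2.trans ?_)
  apply F.mono
  intro l
  rw [F.sub, F.sub, F.sub, F.add, F.se, F.se, F.sum]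
  by_cases hl : l = 1
  · subst hl; simp [h1A]
  · simp only [hl, if_false]
    rw [abs_sub_comm]; simp

lemma TsF.partA2 (F : TsF θ n e co) {k : ℕ} (hk : 2 ≤ k) (h0 : 0 < θ) (h1 : θ ≤ 1 / 2)
    (hθ : θ * k = 1) (g h : X) (hg : ‖g‖ = 1) (hh : ‖h‖ = 1) (hgh : ‖g - h‖ = 2)
    (hy : ∀ y : X, ‖y‖ = 1 → ‖y - g‖ ≤ 1 ∨ ‖y - h‖ ≤ 1) (hg0 : g - co g 1 • e 1 = 0) :
    ∃ σ : ℝ, (σ = 1 ∨ σ = -1) ∧ g = σ • e 1 ∧ h = (-σ) • e 1 := by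
  have hge : g = co g 1 • e 1 := sub_eq_zero.1 hg0
  have habs : |co g 1| = 1 := by
    have := congrArg norm hge
    rw [norm_smul, F.norm_e hk h0 h1 hθ, hg] at this
    simpa using this.symm
  have hh1 : |co h 1| ≤ 1 := by rw [← hh]; exact F.bound h 1
  have hσ : co g 1 = 1 ∨ co g 1 = -1 := by
    rcases abs_eq (zero_le_one) |>.1 habs with h | h <;> simp [h]
  have h2 : 2 ≤ |co h 1 + -co g 1| := by
    have := F.e1' h (-co g 1)
    rw [neg_smul, ← sub_eq_add_neg, ← hge, norm_sub_rev, hgh] at this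
    rcases le_max_iff.1 this with h2 | h2
    · exact h2
    · have := F.erase_norm h 1
      linarith
  have hm : co h 1 = - co g 1 := by
    rw [abs_le] at hh1
    rcases hσ with h | h <;> rw [h] at h2 ⊢ <;>
      rcases le_abs.1 h2 with h3 | h3 <;> linarith
  refine ⟨co g 1, hσ, hge, ?_⟩
  by_contra hne
  have hne' : h - co h 1 • e 1 ≠ 0 := by
    rw [hm]; exact sub_ne_zero.2 hne
  obtain ⟨A, a1, a2, a3, a4⟩ := (F.partA1 hk h0 h1 hθ h hne').exists hk
  have hyn := F.norm_c1A h0 h1 hθ A a2 a1 a3 (co h 1) hh1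
  rcases hy _ hyn with h5 | h5
  · have := F.bound (co h 1 • e 1 + ∑ a ∈ A, e a - g) 1
    rw [F.sub, F.add, F.se, F.sum] at this
    simp only [a3, if_true, if_false, add_zero] at this
    rw [sub_eq_add_neg] at this
    linarith
  · exact absurd (a4 (co h 1)) (not_lt.2 h5)

/-- Abstract surjective sphere isometry. -/
structure SphIso (V : X → X) : Prop where
  norm : ∀ x, ‖x‖ = 1 → ‖V x‖ = 1
  dist : ∀ x y, ‖x‖ = 1 → ‖y‖ = 1 → ‖V x - V y‖ = ‖x - y‖
  surj : ∀ y, ‖y‖ = 1 → ∃ x, ‖x‖ = 1 ∧ V x = y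

lemma TsF.partA (F : TsF θ n e co) {k : ℕ} (hk : 2 ≤ k) (h0 : 0 < θ) (h1 : θ ≤ 1 / 2)
    (hθ : θ * k = 1) {V : X → X} (hV : SphIso V) :
    ∃ σ : ℝ, (σ = 1 ∨ σ = -1) ∧ V (e 1) = σ • e 1 ∧ V (-e 1) = (-σ) • e 1 := by
  have hne := F.norm_e hk h0 h1 hθ
  have hg := hV.norm (e 1) (hne 1)
  have hh := hV.norm (-e 1) (by rw [norm_neg, hne 1])
  have hgh : ‖V (e 1) - V (-e 1)‖ = 2 := by
    rw [hV.dist _ _ (hne 1) (by rw [norm_neg, hne 1]), sub_neg_eq_add, ← two_smul ℝ, norm_smul,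
      hne]
    norm_num
  have hy : ∀ y : X, ‖y‖ = 1 → ‖y - V (e 1)‖ ≤ 1 ∨ ‖y - V (-e 1)‖ ≤ 1 := by
    intro y hy
    obtain ⟨x, hx, rfl⟩ := hV.surj y hy
    rw [hV.dist _ _ hx (hne 1), hV.dist _ _ hx (by rw [norm_neg, hne 1])]
    have hb := F.bound x 1
    have hr := F.erase_norm x 1
    rw [hx] at hb hr
    rw [abs_le] at hb
    rcases le_total 0 (co x 1) with h | h
    · left
      have := F.e1' x (-1)
      rw [neg_one_smul, ← sub_eq_add_neg] at this
      refine this.trans (max_le ?_ hr)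
      rw [abs_le]; constructor <;> linarith
    · right
      have := F.e1' x 1
      rw [one_smul] at this
      rw [sub_neg_eq_add]
      refine this.trans (max_le ?_ hr)
      rw [abs_le]; constructor <;> linarith
  by_cases c1 : V (e 1) - co (V (e 1)) 1 • e 1 = 0
  · exact F.partA2 hk h0 h1 hθ _ _ hg hh hgh hy c1
  by_cases c2 : V (-e 1) - co (V (-e 1)) 1 • e 1 = 0
  · obtain ⟨σ, s1, s2, s3⟩ := F.partA2 hk h0 h1 hθ _ _ hh hg (by rw [norm_sub_rev, hgh])
      (fun y h => (hy y h).symm) c2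
    refine ⟨-σ, ?_, s3, by rw [neg_neg]; exact s2⟩
    rcases s1 with h | h <;> simp [h]
  exfalso
  obtain ⟨A, a1, a2, a3, a4, a5⟩ := ((F.partA1 hk h0 h1 hθ _ c1).and
    (F.partA1 hk h0 h1 hθ _ c2)).exists hk
  have hyn := F.norm_c1A h0 h1 hθ A a2 a1 a3 0 (by simp)
  rcases hy _ hyn with h | h
  · exact absurd (a4 0) (not_lt.2 h)
  · exact absurd (a5 0) (not_lt.2 h)

lemma TsF.partB0 (F : TsF θ n e co) (h1 : θ ≤ 1 / 2) (g : X) (hg : ‖g‖ = 1) (p : ℕ+)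
    (hp : co g p ≠ 0) (hs : |co g p| + ‖g - co g p • e p‖ ≤ 1) :
    (co g p = 1 ∨ co g p = -1) ∧ g = co g p • e p := by
  have h := F.n2 (g - co g p • e p) p (co g p)
  rw [F.sub, F.se, if_pos rfl, sub_add_cancel, hg, sub_self, zero_add] at h
  have hpos := abs_pos.2 hp
  have hnn := norm_nonneg (g - co g p • e p)
  rcases le_max_iff.1 h with h | h
  · have e1 : |co g p| = 1 := by linarith
    refine ⟨?_, ?_⟩
    · rcases abs_eq (zero_le_one) |>.1 e1 with h | h <;> simp [h]
    · have : ‖g - co g p • e p‖ = 0 := by linarith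
      exact sub_eq_zero.1 (norm_eq_zero.1 this)
  · nlinarith

lemma TsF.partB1 (F : TsF θ n e co) {k : ℕ} (hk : 2 ≤ k) (h0 : 0 < θ) (h1 : θ ≤ 1 / 2)
    (hθ : θ * k = 1) {V : X → X} (hV : SphIso V) (i : ℕ+) (τ : ℝ) (hτ : τ = 1 ∨ τ = -1)
    (hg1 : co (V (τ • e i)) 1 = 0) (hh1 : co (V (-τ • e i)) 1 = 0) :
    ∃ (p : ℕ+) (c : ℝ), (c = 1 ∨ c = -1) ∧ V (τ • e i) = c • e p := by
  classical
  have hne := F.norm_e hk h0 h1 hθ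
  have hτ2 : τ * τ = 1 := by rcases hτ with h | h <;> rw [h] <;> norm_num
  have hτa : |τ| = 1 := by rcases hτ with h | h <;> rw [h] <;> norm_num
  have n1 : ‖τ • e i‖ = 1 := by rw [norm_smul, hne, Real.norm_eq_abs, hτa, one_mul]
  have n2 : ‖-τ • e i‖ = 1 := by rw [neg_smul, norm_neg, n1]
  have hg := hV.norm _ n1
  have hh := hV.norm _ n2
  set g := V (τ • e i) with hgd
  set h := V (-τ • e i) with hhd
  have hex : ∃ p, co g p ≠ 0 := by
    by_contra hcon
    push Not at hcon
    have : g = 0 := F.ext _ _ fun i => by rw [hcon, F.zero]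
    rw [this, norm_zero] at hg
    exact zero_ne_one hg
  obtain ⟨p, hp, hmin⟩ : ∃ p, co g p ≠ 0 ∧ ∀ j, j < p → co g j = 0 := by
    refine ⟨PNat.find hex, PNat.find_spec hex, fun j hj => ?_⟩
    by_contra h
    exact PNat.find_min hex hj h
  have hp2 : 2 ≤ (p : ℕ) := by
    have : p ≠ 1 := by rintro rfl; exact hp hg1
    have : 1 < p := lt_of_le_of_ne one_le (Ne.symm this)
    exact_mod_cast this
  have hs : |co g p| + ‖g - co g p • e p‖ ≤ 1 := by
    by_contra hcon
    push Not at hcon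
    set s := |co g p| + ‖g - co g p • e p‖ with hsd
    have hε : 0 < min (θ * (s - 1) / 2) (θ * θ) :=
      lt_min (by have : 0 < s - 1 := by linarith
                 positivity) (by positivity)
    obtain ⟨A, a1, a2, a3, a4, a5⟩ := ((F.far1 hθ g p hp2 hmin _ hε).and
      (F.far2 hk h0 h1 hθ h hh1 _ hε)).exists hk
    obtain ⟨v, v1, v2⟩ := hV.surj _ (F.ind1 h0 h1 hθ A a2 a1.le)
    rw [← hsd, ← v2, hgd, hV.dist _ _ n1 v1, norm_sub_rev (τ • e i)] at a4
    rw [hh, ← v2, hhd, hV.dist _ _ n2 v1, norm_sub_rev (-τ • e i)] at a5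
    have m1 := min_le_left (θ * (s - 1) / 2) (θ * θ)
    have m2 := min_le_right (θ * (s - 1) / 2) (θ * θ)
    set E := min (θ * (s - 1) / 2) (θ * θ)
    have hsp : 0 < θ * (s - 1) := by
      have : 0 < s - 1 := by linarith
      positivity
    have b1 := F.n2 v i (-τ)
    rw [v1, abs_neg, hτa, neg_smul, ← sub_eq_add_neg] at b1
    obtain ⟨b, hb⟩ : ∃ b, co v i = τ * b := ⟨τ * co v i, by rw [← mul_assoc, hτ2, one_mul]⟩
    have hbb := F.bound v i
    rw [v1, hb, abs_mul, hτa, one_mul] at hbb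
    have habs : |co v i + -τ| = |b - 1| := by
      rw [hb, show τ * b + -τ = τ * (b - 1) by ring, abs_mul, hτa, one_mul]
    rw [habs] at b1
    have hb1 : 1 + θ * s - E ≤ |b - 1| := by
      rcases le_max_iff.1 (a4.trans b1) with h | h
      · exact h
      · exfalso; nlinarith
    rw [abs_le] at hbb
    rw [abs_of_nonpos (by linarith)] at hb1
    have hba : θ < -b := by nlinarith
    rw [neg_smul, sub_neg_eq_add] at a5
    have hθθ : θ * θ < θ := by nlinarith
    by_cases hhalf : b ≤ -(1 / 2)
    · have := F.sub_one_norm v τ i (by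
        rw [hb, show τ * b + τ = τ * (b + 1) by ring, abs_mul, abs_mul, hτa, one_mul, one_mul]
        rw [abs_of_nonneg (by linarith), abs_of_nonpos (by linarith)]
        linarith)
      rw [v1] at this
      linarith
    · push Not at hhalf
      have c1 := F.sub_one_norm v (-2 * b * τ) i (by
        rw [hb, show τ * b + -2 * b * τ = -(τ * b) by ring, abs_neg])
      have c2 := F.n2 (v + (-2 * b * τ) • e i) i (τ * (1 + 2 * b))
      rw [F.add, F.se, if_pos rfl, hb] at c2
      rw [show τ * b + -2 * b * τ + τ * (1 + 2 * b) = τ * (1 + b) by ring, abs_mul, abs_mul, hτa,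
        one_mul, one_mul, abs_of_nonneg (by linarith), abs_of_nonneg (by linarith)] at c2
      rw [show v + (-2 * b * τ) • e i + (τ * (1 + 2 * b)) • e i = v + τ • e i by module] at c2
      rcases le_max_iff.1 c2 with h | h
      · linarith
      · nlinarith
  obtain ⟨q1, q2⟩ := F.partB0 h1 g hg p hp hs
  exact ⟨p, _, q1, q2⟩

lemma TsF.partB2 (F : TsF θ n e co) {k : ℕ} (hk : 2 ≤ k) (h0 : 0 < θ) (h1 : θ ≤ 1 / 2)
    (hθ : θ * k = 1) {V : X → X} (hV : SphIso V) (i : ℕ+) :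
    ∃ (p : ℕ+) (c : ℝ), (c = 1 ∨ c = -1) ∧ V (e i) = c • e p ∧ V (-e i) = (-c) • e p ∧
      (i = 1 → p = 1) := by
  have hne := F.norm_e hk h0 h1 hθ
  obtain ⟨σ, s1, s2, s3⟩ := F.partA hk h0 h1 hθ hV
  by_cases hi : i = 1
  · subst hi
    exact ⟨1, σ, s1, s2, s3, fun _ => rfl⟩
  have hz : ∀ τ : ℝ, (τ = 1 ∨ τ = -1) → co (V (τ • e i)) 1 = 0 := by
    intro τ hτ
    have hτa : |τ| = 1 := by rcases hτ with h | h <;> rw [h] <;> norm_num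
    have n1 : ‖τ • e i‖ = 1 := by rw [norm_smul, hne, Real.norm_eq_abs, hτa, one_mul]
    have d1 := hV.dist _ _ n1 (hne 1)
    have d2 := hV.dist _ (-e 1) n1 (by rw [norm_neg, hne])
    have f1 := F.norm_ee hk h0 h1 hθ i 1 hi τ (-1) hτa.le (by simp)
    have f2 := F.norm_ee hk h0 h1 hθ i 1 hi τ 1 hτa.le (by simp)
    rw [neg_one_smul, ← sub_eq_add_neg, ← d1, s2] at f1
    rw [one_smul, ← sub_neg_eq_add, ← d2, s3] at f2
    have g1 := (F.bound _ 1).trans f1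
    have g2 := (F.bound _ 1).trans f2
    rw [F.sub, F.se, if_pos rfl, abs_le] at g1 g2
    rcases s1 with h | h <;> rw [h] at g1 g2 <;> linarith
  have z1 := hz 1 (by simp)
  have z2 := hz (-1) (by simp)
  obtain ⟨p, c, hc, hp⟩ := F.partB1 hk h0 h1 hθ hV i 1 (by simp) z1 z2
  obtain ⟨q, d, hd, hq⟩ := F.partB1 hk h0 h1 hθ hV i (-1) (by simp) z2 (by rw [neg_neg]; exact z1)
  rw [one_smul] at hp
  rw [neg_one_smul] at hq
  have hgh : ‖V (e i) - V (-e i)‖ = 2 := by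
    rw [hV.dist _ _ (hne i) (by rw [norm_neg, hne i]), sub_neg_eq_add, ← two_smul ℝ, norm_smul,
      hne]
    norm_num
  rw [hp, hq] at hgh
  have hca : |c| ≤ 1 := by rcases hc with h | h <;> rw [h] <;> norm_num
  have hda : |-d| ≤ 1 := by rcases hd with h | h <;> rw [h] <;> norm_num
  by_cases hpq : p = q
  · subst hpq
    refine ⟨p, c, hc, hp, ?_, fun h => absurd h hi⟩
    rw [← sub_smul, norm_smul, hne, Real.norm_eq_abs, mul_one] at hgh
    rw [hq]
    congr 1
    rcases hc with h | h <;> rcases hd with h' | h' <;> subst h <;> subst h' <;> simp_all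
  · exfalso
    have := F.norm_ee hk h0 h1 hθ p q hpq c (-d) hca hda
    rw [neg_smul, ← sub_eq_add_neg, hgh] at this
    norm_num at this

lemma TsF.partC (F : TsF θ n e co) {k : ℕ} (hk : 2 ≤ k) (h0 : 0 < θ) (h1 : θ ≤ 1 / 2)
    (hθ : θ * k = 1) {V : X → X} (hV : SphIso V) (π : ℕ+ → ℕ+) (c : ℕ+ → ℝ)
    (hc : ∀ i, c i = 1 ∨ c i = -1) (hp : ∀ i, V (e i) = c i • e (π i))
    (hm : ∀ i, V (-e i) = (-c i) • e (π i)) (hπ1 : π 1 = 1) (hinj : Function.Injective π)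
    (G : Finset ℕ+) (hG : 1 ∉ G) : ‖∑ a ∈ G.image π, e a‖ ≤ ‖∑ a ∈ G, e a‖ := by
  classical
  have hne := F.norm_e hk h0 h1 hθ
  set M := ‖∑ a ∈ G, e a‖ with hM
  have hM0 : 0 ≤ M := norm_nonneg _
  obtain ⟨t, ht, htM⟩ : ∃ t : ℝ, 0 < t ∧ t * M < 1 - θ := by
    refine ⟨(1 - θ) / (M + 1), div_pos (by linarith) (by linarith), ?_⟩
    rw [div_mul_eq_mul_div, div_lt_iff₀ (by linarith)]
    nlinarith
  set u := t • ∑ a ∈ G, e a with hu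
  have hun : ‖u‖ = t * M := by rw [hu, norm_smul, Real.norm_eq_abs, abs_of_pos ht]
  have hu1 : co u 1 = 0 := by rw [hu, F.smul, F.sum, if_neg hG, mul_zero]
  have huj : ∀ j ∈ G, co u j = t := by
    intro j hj; rw [hu, F.smul, F.sum, if_pos hj, mul_one]
  set y := u + (1 : ℝ) • e 1 with hy
  have hyn : ‖y‖ = 1 := by
    apply le_antisymm
    · refine (F.e1' u 1).trans (max_le (by rw [hu1]; simp) ?_)
      rw [hu1, zero_smul, sub_zero, hun]; linarith
    · have := F.bound y 1
      have e1 : co y 1 = 1 := by rw [hy, F.add, F.se, hu1]; simp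
      rwa [e1, abs_one] at this
  have hnm : ∀ i, ‖-e i‖ = 1 := fun i => by rw [norm_neg, hne]
  have hVy := hV.norm y hyn
  have hca : ∀ i, |c i| = 1 := fun i => by rcases hc i with h | h <;> rw [h] <;> norm_num
  have hb := F.bound (V y) 1
  rw [hVy] at hb
  have hr := F.erase_norm (V y) 1
  rw [hVy] at hr
  have hy1 : co (V y) 1 = c 1 := by
    have d := hV.dist y (-e 1) hyn (hnm 1)
    have l := F.bound (y - -e 1) 1
    have e1 : co (y - -e 1) 1 = 2 := by
      rw [F.sub, F.neg, hy, F.add, F.se, F.self, hu1]; norm_num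
    rw [e1, ← d, hm, hπ1, neg_smul, sub_neg_eq_add, abs_two] at l
    have l2 := F.e1' (V y) (c 1)
    have := l.trans l2
    rcases le_max_iff.1 this with h | h
    · rw [abs_le] at hb
      rcases hc 1 with h' | h' <;> rw [h'] at h ⊢ <;> rcases le_abs.1 h with h3 | h3 <;> linarith
    · linarith
  set w := V y - co (V y) 1 • e 1 with hw
  have hwn : ‖w‖ = t * M := by
    have d := hV.dist y (e 1) hyn (hne 1)
    rw [hp, hπ1, ← hy1] at d
    rw [hw, d, hy, one_smul, add_sub_cancel_right, hun]
  have hwj : ∀ j ∈ G, t ≤ |co w (π j)| := by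
    intro j hj
    have hj1 : j ≠ 1 := fun h => hG (h ▸ hj)
    have hpj1 : π j ≠ 1 := fun h => hj1 (hinj (h.trans hπ1.symm))
    have d := hV.dist y (-e j) hyn (hnm j)
    have l := F.bound (y - -e j) j
    rw [F.sub, F.neg, hy, F.add, F.se, F.self, huj j hj] at l
    simp only [if_true, hj1, if_false] at l
    rw [← hy, ← d, hm, neg_smul, sub_neg_eq_add, add_zero, sub_neg_eq_add,
      abs_of_pos (by linarith)] at l
    have l2 := F.e1 (V y + c j • e (π j))
    have e1 : co (V y + c j • e (π j)) 1 = co (V y) 1 := by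
      rw [F.add, F.se, if_neg (Ne.symm hpj1), add_zero]
    rw [e1] at l2
    have e2 : V y + c j • e (π j) - co (V y) 1 • e 1 = w + c j • e (π j) := by
      rw [hw]; abel
    rw [e2] at l2
    have l3 := F.n2 w (π j) (c j)
    rw [hca, hwn] at l3
    rcases le_max_iff.1 (l.trans l2) with h | h
    · linarith
    · rcases le_max_iff.1 (h.trans l3) with h | h
      · have := abs_add_le (co w (π j)) (c j)
        rw [hca] at this
        linarith
      · linarith
  have : ‖t • ∑ a ∈ G.image π, e a‖ ≤ ‖w‖ := by
    apply F.mono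
    intro l
    rw [F.smul, F.sum]
    split_ifs with h
    · obtain ⟨j, hj, rfl⟩ := Finset.mem_image.1 h
      rw [mul_one, abs_of_pos ht]
      exact hwj j hj
    · simp
  rw [norm_smul, Real.norm_eq_abs, abs_of_pos ht, hwn] at this
  exact le_of_mul_le_mul_left this ht

end
/-- For integer `θ⁻¹ ≥ 2` and `n ≥ 2`, every surjective isometry of
the unit sphere of `T[θ, S_n]` maps `eᵢ` to `εᵢ eᵢ` for some signs `εᵢ ∈ {−1, 1}`. -/
theorem tsirelson_sphere_isometry_basis_Sn
    (θ : ℝ) (hθ0 : 0 < θ) (k : ℕ) (hk : 2 ≤ k) (hθk : θ⁻¹ = (k : ℝ))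
    (n : ℕ) (hn : 2 ≤ n)
    (X : Type*) [NormedAddCommGroup X] [NormedSpace ℝ X] (e : ℕ+ → X)
    (hX : IsTsirelsonSpace θ n X e)
    (U : Metric.sphere (0 : X) 1 → Metric.sphere (0 : X) 1)
    (hU : Isometry U) (hUsurj : Function.Surjective U) :
    ∃ ε : ℕ+ → ℝ,
      (∀ i, ε i = 1 ∨ ε i = -1) ∧
      ∀ (i : ℕ+) (h : e i ∈ Metric.sphere (0 : X) 1),
        (U ⟨e i, h⟩ : X) = ε i • e i := by

  classical
  obtain ⟨m, rfl⟩ : ∃ m, n = m + 2 := ⟨n - 2, by omega⟩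
  have hk' : (2 : ℝ) ≤ k := by exact_mod_cast hk
  have hθ : θ * k = 1 := by rw [← hθk]; exact mul_inv_cancel₀ hθ0.ne'
  have h1 : θ ≤ 1 / 2 := by nlinarith
  obtain ⟨co, F⟩ := exists_TsF hθ0.le h1 m e hX
  have hne := F.norm_e hk hθ0 h1 hθ
  let V : X → X := fun x => if h : ‖x‖ = 1 then (U ⟨x, by simpa using h⟩ : X) else 0
  have hVe : ∀ x (h : ‖x‖ = 1), V x = U ⟨x, by simpa using h⟩ := fun x h => dif_pos h
  have hV : SphIso V := by
    refine ⟨?_, ?_, ?_⟩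
    · intro x hx
      rw [hVe x hx]
      simpa using (U ⟨x, by simpa using hx⟩).2
    · intro x y hx hy
      have := hU.dist_eq ⟨x, by simpa using hx⟩ ⟨y, by simpa using hy⟩
      rw [Subtype.dist_eq, Subtype.dist_eq, dist_eq_norm, dist_eq_norm] at this
      rw [hVe x hx, hVe y hy]
      exact this
    · intro y hy
      obtain ⟨x, hx⟩ := hUsurj ⟨y, by simpa using hy⟩
      have hx1 : ‖(x : X)‖ = 1 := by simpa using x.2
      refine ⟨x, hx1, ?_⟩
      rw [hVe _ hx1]
      exact congrArg Subtype.val hx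
  choose π c hc hp hm hπ1 using F.partB2 hk hθ0 h1 hθ hV
  have hnm : ∀ i, ‖-e i‖ = 1 := fun i => by rw [norm_neg, hne]
  have hinj : Function.Injective π := by
    intro i j hij
    by_contra hne'
    have hcc : V (e j) = V (e i) ∨ V (e j) = V (-e i) := by
      rw [hp, hp, hm, hij]
      rcases hc i with h | h <;> rcases hc j with h' | h' <;> rw [h, h'] <;> simp
    rcases hcc with h | h
    · have d := hV.dist _ _ (hne j) (hne i)
      rw [h, sub_self, norm_zero] at d
      have l := F.bound (e j - e i) i
      rw [← d, F.sub, F.self, F.self, if_neg hne', if_pos rfl] at l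
      norm_num at l
    · have d := hV.dist _ _ (hne j) (hnm i)
      rw [h, sub_self, norm_zero] at d
      have l := F.bound (e j - -e i) i
      rw [← d, F.sub, F.neg, F.self, F.self, if_neg hne', if_pos rfl] at l
      norm_num at l
  have hid := perm_id k hk hθ hθ0 h1 m π hinj (hπ1 1 rfl) (by
    intro G hG
    rw [← F.ind, ← F.ind]
    exact F.partC hk hθ0 h1 hθ hV π c hc hp hm (hπ1 1 rfl) hinj G hG)
  refine ⟨c, hc, fun i h => ?_⟩
  have := hp i
  rw [hVe _ (hne i), hid] at this
  exact this
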